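/- arXiv:math/0303250 — 3 statements merged into one kernel-verified Lean document; each statement's English description precedes it below -/
import Mathlib

section
/- Let m ≥ 1 and 0 ≤ a ≤ m−1 be integers, and for complex q, x with |q| < 1 and 0 < |x| < 1 define W_m^{(a)}(x) = x^{−1}·(Σ_{k₁,…,k_m ≥ 0} (x;q)_{k_m} · x^{k_m} · (∏_{i=1}^{a−1} q^{k_i²−k_i} x^{2k_i} [k_{i+1} choose k_i]_q) · q^{k_a²−k_a} x^{2k_a} [k_{a+1}+1 choose k_a]_q · (∏_{i=a+1}^{m−1} q^{k_i²} x^{2k_i} [k_{i+1} choose k_i]_q) − 1), with the convention k₀ = 0 when a = 0. Then W_m^{(a)} satisfies W_m^{(a)}(x) = 1 + x + x² + ⋯ + x^{2a} − q^{m−a}·x^{2m} − q^{m−a+1}·x^{2m+1}·W_m^{(a)}(q·x). -/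
/-- The finite q-Pochhammer symbol `(x;q)_n = ∏_{i=1}^n (1 - x q^{i-1})`. -/
noncomputable def qPoch (q x : ℂ) (n : ℕ) : ℂ := ∏ i ∈ Finset.range n, (1 - x * q ^ i)

/-- The Gaussian binomial coefficient `[n choose c]_q`. -/
noncomputable def qBinom (q : ℂ) (n c : ℕ) : ℂ :=
  if c ≤ n then qPoch q q n / (qPoch q q c * qPoch q q (n - c)) else 0

/-- Extends a tuple `(k₁,…,k_m)` to all of `ℕ` by `0` (in particular `k₀ = 0`). -/
def Kfun (m : ℕ) (k : Fin m → ℕ) (i : ℕ) : ℕ :=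
  if h : 1 ≤ i ∧ i ≤ m then k ⟨i - 1, by omega⟩ else 0

/-- The summand of the series defining `W_m^{(a)}(x)`:
`(x;q)_{k_m} x^{k_m} (∏_{i=1}^{a-1} q^{k_i²-k_i} x^{2k_i} [k_{i+1},k_i]) ·
 q^{k_a²-k_a} x^{2k_a} [k_{a+1}+1,k_a] · (∏_{i=a+1}^{m-1} q^{k_i²} x^{2k_i} [k_{i+1},k_i])`,
with the convention `k₀ = 0`. -/
noncomputable def Wterm (q x : ℂ) (m a : ℕ) (k : Fin m → ℕ) : ℂ :=
  qPoch q x (Kfun m k m) * x ^ (Kfun m k m) *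
  (∏ i ∈ Finset.Ico 1 a,
    q ^ (Kfun m k i ^ 2 - Kfun m k i) * x ^ (2 * Kfun m k i) *
      qBinom q (Kfun m k (i + 1)) (Kfun m k i)) *
  (q ^ (Kfun m k a ^ 2 - Kfun m k a) * x ^ (2 * Kfun m k a) *
    qBinom q (Kfun m k (a + 1) + 1) (Kfun m k a)) *
  (∏ i ∈ Finset.Ico (a + 1) m,
    q ^ (Kfun m k i ^ 2) * x ^ (2 * Kfun m k i) *
      qBinom q (Kfun m k (i + 1)) (Kfun m k i))

/-- `W_m^{(a)}(x) = x⁻¹ ((Σ_{k₁,…,k_m} Wterm) − 1)`. -/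
noncomputable def Wfun (q : ℂ) (m a : ℕ) (x : ℂ) : ℂ :=
  x⁻¹ * ((∑' k : Fin m → ℕ, Wterm q x m a k) - 1)


lemma qPoch_zero (q b : ℂ) : qPoch q b 0 = 1 := by simp [qPoch]

lemma qPoch_succ (q b : ℂ) (n : ℕ) : qPoch q b (n + 1) = qPoch q b n * (1 - b * q ^ n) := by
  simp [qPoch, Finset.prod_range_succ]

lemma qPoch_succ_left (q b : ℂ) (n : ℕ) :
    qPoch q b (n + 1) = (1 - b) * qPoch q (b * q) n := by
  simp only [qPoch, Finset.prod_range_succ']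
  rw [mul_comm]
  congr 1
  · simp
  · apply Finset.prod_congr rfl
    intro i _
    ring

lemma qPoch_add (q b : ℂ) (m n : ℕ) :
    qPoch q b (m + n) = qPoch q b m * qPoch q (b * q ^ m) n := by
  simp only [qPoch, Finset.prod_range_add]
  congr 1
  apply Finset.prod_congr rfl
  intro i _
  ring

lemma one_sub_ne {y : ℂ} (hy : ‖y‖ < 1) : 1 - y ≠ 0 := by
  intro h
  have : y = 1 := by linear_combination -h
  simp [this] at hy

lemma norm_mul_pow_lt {q b : ℂ} (hq : ‖q‖ < 1) (hb : ‖b‖ < 1) (n : ℕ) : ‖b * q ^ n‖ < 1 := by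
  rw [norm_mul, norm_pow]
  have : ‖q‖ ^ n ≤ 1 := pow_le_one₀ (norm_nonneg _) hq.le
  nlinarith [norm_nonneg b]

lemma fac_ne {q b : ℂ} (hq : ‖q‖ < 1) (hb : ‖b‖ < 1) (n : ℕ) : 1 - b * q ^ n ≠ 0 :=
  one_sub_ne (norm_mul_pow_lt hq hb n)

lemma qPoch_ne {q b : ℂ} (hq : ‖q‖ < 1) (hb : ‖b‖ < 1) (n : ℕ) : qPoch q b n ≠ 0 := by
  rw [qPoch, Finset.prod_ne_zero_iff]
  intro i _
  exact fac_ne hq hb i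

lemma geo_le {ρ : ℝ} (h0 : 0 ≤ ρ) (h1 : ρ < 1) (n : ℕ) :
    ∑ i ∈ Finset.range n, ρ ^ i ≤ (1 - ρ)⁻¹ := by
  rw [← tsum_geometric_of_lt_one h0 h1]
  exact (summable_geometric_of_lt_one h0 h1).sum_le_tsum _ (fun i _ => pow_nonneg h0 i)

/-- uniform bounds for the Pochhammer symbol and its inverse -/
lemma qPoch_bound {q b : ℂ} (hq : ‖q‖ < 1) (hb : ‖b‖ < 1) :
    ∃ C : ℝ, 1 ≤ C ∧ (∀ n, ‖qPoch q b n‖ ≤ C) ∧ ∀ n, ‖(qPoch q b n)⁻¹‖ ≤ C := by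
  set β := ‖b‖
  set ρ := ‖q‖
  have hβ : 0 < 1 - β := by linarith
  have hρ : 0 < 1 - ρ := by linarith
  have hβ0 : 0 ≤ β := norm_nonneg _
  have hρ0 : 0 ≤ ρ := norm_nonneg _
  have key : ∀ n, Real.exp (∑ i ∈ Finset.range n, ρ ^ i * (1 - β)⁻¹)
      ≤ Real.exp ((1 - ρ)⁻¹ * (1 - β)⁻¹) := by
    intro n
    apply Real.exp_le_exp.2
    rw [← Finset.sum_mul]
    gcongr
    exact geo_le hρ0 hq n
  refine ⟨Real.exp ((1 - ρ)⁻¹ * (1 - β)⁻¹), Real.one_le_exp (by positivity), ?_, ?_⟩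
  · intro n
    refine le_trans ?_ (key n)
    rw [qPoch, norm_prod, Real.exp_sum]
    apply Finset.prod_le_prod
    · intros; positivity
    intro i _
    refine le_trans ?_ (Real.add_one_le_exp _)
    have h1 : ‖1 - b * q ^ i‖ ≤ 1 + β * ρ ^ i := by
      refine (norm_sub_le _ _).trans ?_
      simp [β, ρ]
    have h2 : β ≤ (1 - β)⁻¹ := by
      have : 1 ≤ (1 - β)⁻¹ := (one_le_inv₀ hβ).2 (by linarith)
      linarith
    have h3 : 0 ≤ ρ ^ i := by positivity
    nlinarith
  · intro n
    refine le_trans ?_ (key n)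
    rw [qPoch, ← Finset.prod_inv_distrib, norm_prod, Real.exp_sum]
    apply Finset.prod_le_prod
    · intros; positivity
    intro i _
    refine le_trans ?_ (Real.add_one_le_exp _)
    have hp : ρ ^ i ≤ 1 := pow_le_one₀ hρ0 hq.le
    have h3 : 0 ≤ ρ ^ i := by positivity
    have h1 : 1 - β * ρ ^ i ≤ ‖1 - b * q ^ i‖ := by
      have := norm_sub_norm_le (1 : ℂ) (b * q ^ i)
      simpa [β, ρ] using this
    have h4 : 0 < 1 - β * ρ ^ i := by nlinarith
    rw [norm_inv]
    refine (inv_anti₀ h4 h1).trans ?_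
    rw [inv_le_iff_one_le_mul₀ h4]
    have h5 : (1 - β)⁻¹ * (1 - β) = 1 := inv_mul_cancel₀ hβ.ne'
    have h6 : 0 < (1 - β)⁻¹ := by positivity
    have h7 : β * ρ ^ i ≤ β := by nlinarith
    have h8 : (1 - β)⁻¹ * (1 - β * ρ ^ i) ≥ 1 := by nlinarith
    have h9 : (1 - β)⁻¹ * (1 - β * ρ ^ i) * ρ ^ i ≥ 1 * ρ ^ i := by gcongr
    nlinarith

lemma choose_two_succ (n : ℕ) : (n + 1).choose 2 = n.choose 2 + n := by
  rw [Nat.choose_succ_succ' n 1]; simp; ring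

lemma sq_sub_self (n : ℕ) : n ^ 2 - n = 2 * n.choose 2 := by
  induction n with
  | zero => simp
  | succ n ih =>
    rw [choose_two_succ]
    have : n ≤ n ^ 2 := Nat.le_self_pow (by norm_num) n
    have h : (n + 1) ^ 2 = n ^ 2 + 2 * n + 1 := by ring
    omega

lemma sq_eq_choose (n : ℕ) : n ^ 2 = 2 * n.choose 2 + n := by
  have := sq_sub_self n
  have : n ≤ n ^ 2 := Nat.le_self_pow (by norm_num) n
  omega

/-- the q-Chu-Vandermonde sum behind the Bailey lemma -/
lemma vand {q : ℂ} (hq : ‖q‖ < 1) (N : ℕ) : ∀ B : ℂ, ‖B‖ < 1 →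
    ∑ j ∈ Finset.range (N + 1), B ^ j * q ^ (2 * j.choose 2) /
      (qPoch q q (N - j) * qPoch q q j * qPoch q B j) = 1 / (qPoch q q N * qPoch q B N) := by
  induction N with
  | zero => intro B _; simp [qPoch_zero]
  | succ N ih =>
    intro B hB
    have hBq : ‖B * q‖ < 1 := by simpa using norm_mul_pow_lt hq hB 1
    have hp := fun n => qPoch_ne hq hq n
    have hqN : ∀ n : ℕ, 1 - q ^ (n + 1) ≠ 0 := fun n => by
      have := fac_ne hq hq n
      rwa [← pow_succ'] at this
    have hB1 : 1 - B ≠ 0 := one_sub_ne hB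
    have hBN := qPoch_ne hq hB
    have hBqN := qPoch_ne hq hBq
    have hps : ∀ n, qPoch q q (n + 1) = qPoch q q n * (1 - q ^ (n + 1)) := fun n => by
      rw [qPoch_succ, ← pow_succ']
    set T : ℕ → ℂ := fun j => B ^ j * q ^ (2 * j.choose 2) /
      (qPoch q q (N + 1 - j) * qPoch q q j * qPoch q B j) with hT
    have e1 : ∑ j ∈ Finset.range (N + 2), (1 - q ^ (N + 1 - j)) * T j
        = 1 / (qPoch q q N * qPoch q B N) := by
      rw [Finset.sum_range_succ, ← ih B hB]
      simp only [Nat.sub_self, pow_zero, sub_self, zero_mul, add_zero]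
      apply Finset.sum_congr rfl
      intro j hj
      have hj' : j ≤ N := by simpa [Nat.lt_succ_iff] using hj
      have hs : N + 1 - j = (N - j) + 1 := by omega
      simp only [hT]
      rw [hs, hps]
      have := hp (N - j); have := hp j; have := hBN j; have := hqN (N - j)
      field_simp
    have e2 : ∑ j ∈ Finset.range (N + 2), q ^ (N + 1 - j) * (1 - q ^ j) * T j
        = q ^ N * B / (1 - B) * (1 / (qPoch q q N * qPoch q (B * q) N)) := by
      rw [Finset.sum_range_succ', ← ih (B * q) hBq, Finset.mul_sum]
      simp only [pow_zero, sub_self, mul_zero, zero_mul, add_zero]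
      apply Finset.sum_congr rfl
      intro j hj
      have hj' : j ≤ N := by simpa [Nat.lt_succ_iff] using hj
      obtain ⟨d, rfl⟩ := Nat.exists_eq_add_of_le hj'
      simp only [hT]
      rw [show j + d + 1 - (j + 1) = d by omega, show j + d - j = d by omega, hps,
        qPoch_succ_left, choose_two_succ]
      have := hp d; have := hp j; have := hBqN j; have := hqN j
      field_simp
      ring
    have e3 : (1 - q ^ (N + 1)) * ∑ j ∈ Finset.range (N + 2), T j
        = 1 / (qPoch q q N * qPoch q B N)
          + q ^ N * B / (1 - B) * (1 / (qPoch q q N * qPoch q (B * q) N)) := by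
      rw [← e1, ← e2, ← Finset.sum_add_distrib, Finset.mul_sum]
      apply Finset.sum_congr rfl
      intro j hj
      have hj' : j ≤ N + 1 := by simpa [Nat.lt_succ_iff] using hj
      have : q ^ (N + 1) = q ^ (N + 1 - j) * q ^ j := by
        rw [← pow_add]; congr 1; omega
      rw [this]; ring
    have h1 := qPoch_succ q B N
    have h2 := qPoch_succ_left q B N
    have hf := fac_ne hq hB N
    have h3 : (1 - B) * qPoch q (B * q) N = qPoch q B N * (1 - B * q ^ N) := by rw [← h1, h2]
    have h4 : q ^ N * B / (1 - B) * (1 / (qPoch q q N * qPoch q (B * q) N))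
       = q ^ N * B / (qPoch q q N * (qPoch q B N * (1 - B * q ^ N))) := by
      rw [← h3]
      have := hp N; have := hBqN N
      field_simp
    rw [h4] at e3
    apply mul_left_cancel₀ (hqN N)
    rw [e3, hps, h1]
    have := hp N; have := hBN N; have := hqN N
    have hf' : 1 - q ^ N * B ≠ 0 := by rwa [mul_comm]
    field_simp
    ring

def IsB (q b : ℂ) (α β : ℕ → ℂ) : Prop :=
  ∀ n, β n = ∑ r ∈ Finset.range (n + 1), α r / (qPoch q q (n - r) * qPoch q b (n + r))

lemma bailey_step {q b : ℂ} (hq : ‖q‖ < 1) (hb : ‖b‖ < 1) {α β : ℕ → ℂ} (h : IsB q b α β) :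
    IsB q b (fun r => b ^ r * q ^ (2 * r.choose 2) * α r)
      (fun n => ∑ k ∈ Finset.range (n + 1),
        b ^ k * q ^ (2 * k.choose 2) / qPoch q q (n - k) * β k) := by
  intro n
  simp only
  have hp := fun n => qPoch_ne hq hq n
  have hbn := qPoch_ne hq hb
  have step : ∀ r ∈ Finset.range (n + 1),
      b ^ r * q ^ (2 * r.choose 2) * α r / (qPoch q q (n - r) * qPoch q b (n + r))
      = ∑ k ∈ Finset.Ico r (n + 1), b ^ k * q ^ (2 * k.choose 2) / qPoch q q (n - k) *
          (α r / (qPoch q q (k - r) * qPoch q b (k + r))) := by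
    intro r hr
    have hr' : r ≤ n := by simpa [Nat.lt_succ_iff] using hr
    obtain ⟨N, rfl⟩ := Nat.exists_eq_add_of_le hr'
    have hB := norm_mul_pow_lt hq hb (2 * r)
    have v := vand hq N _ hB
    rw [Finset.sum_Ico_eq_sum_range, show r + N + 1 - r = N + 1 by omega,
      show r + N - r = N by omega, show r + N + r = 2 * r + N by omega, qPoch_add]
    have : b ^ r * q ^ (2 * r.choose 2) * α r /
        (qPoch q q N * (qPoch q b (2 * r) * qPoch q (b * q ^ (2 * r)) N))
        = b ^ r * q ^ (2 * r.choose 2) * α r / qPoch q b (2 * r) *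
          (1 / (qPoch q q N * qPoch q (b * q ^ (2 * r)) N)) := by
      have := hp N; have := hbn (2 * r); have := qPoch_ne hq hB N
      field_simp
    rw [this, ← v, Finset.mul_sum]
    apply Finset.sum_congr rfl
    intro j hj
    have hj' : j ≤ N := by simpa [Nat.lt_succ_iff] using hj
    obtain ⟨d, rfl⟩ := Nat.exists_eq_add_of_le hj'
    rw [show j + d - j = d by omega, show r + (j + d) - (r + j) = d by omega,
      show r + j - r = j by omega, show r + j + r = 2 * r + j by omega, qPoch_add]
    have hc : (2 * (r + j).choose 2) = 2 * r.choose 2 + 2 * j.choose 2 + 2 * r * j := by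
      have h1 := sq_eq_choose (r + j)
      have h2 := sq_eq_choose r
      have h3 := sq_eq_choose j
      have h4 : (r + j) ^ 2 = r ^ 2 + j ^ 2 + 2 * r * j := by ring
      omega
    rw [hc]
    have := hp d; have := hp j; have := hbn (2 * r); have := qPoch_ne hq hB j
    field_simp
    ring
  rw [Finset.sum_congr rfl step]
  have h' : ∀ n, β n = ∑ r ∈ Finset.range (n + 1),
      α r / (qPoch q q (n - r) * qPoch q b (n + r)) := h
  simp only [h', Finset.mul_sum]
  apply Finset.sum_comm'
  intro k r
  simp only [Finset.mem_range, Finset.mem_Ico]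
  omega

noncomputable def alpha0 (q b : ℂ) : ℕ → ℂ
  | 0 => 1
  | r + 1 => (-1) ^ (r + 1) * q ^ ((r + 1).choose 2) * qPoch q b r * (1 - b * q ^ (2 * r + 1))
      / qPoch q q (r + 1)

lemma unit_pair {q b : ℂ} (hq : ‖q‖ < 1) (hb : ‖b‖ < 1) :
    IsB q b (alpha0 q b) (fun n => if n = 0 then 1 else 0) := by
  intro n
  have hp := fun n => qPoch_ne hq hq n
  have hbn := qPoch_ne hq hb
  have hqN : ∀ n : ℕ, 1 - q ^ (n + 1) ≠ 0 := fun n => by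
    have := fac_ne hq hq n
    rwa [← pow_succ'] at this
  have hps : ∀ n, qPoch q q (n + 1) = qPoch q q n * (1 - q ^ (n + 1)) := fun n => by
    rw [qPoch_succ, ← pow_succ']
  rcases n with _ | n
  · simp [alpha0, qPoch_zero]
  have key : ∀ R, R ≤ n + 1 → (1 - q ^ (n + 1)) * ∑ r ∈ Finset.range (R + 1),
      alpha0 q b r / (qPoch q q (n + 1 - r) * qPoch q b (n + 1 + r))
      = (-1) ^ R * q ^ ((R + 1).choose 2) * qPoch q b R * (1 - q ^ (n + 1 - R)) /
        (qPoch q q R * qPoch q q (n + 1 - R) * qPoch q b (n + 1 + R)) := by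
    intro R
    induction R with
    | zero =>
      intro _
      simp [alpha0, qPoch_zero]
      ring
    | succ R ih =>
      intro hR
      rw [Finset.sum_range_succ, mul_add, ih (by omega)]
      obtain ⟨d, rfl⟩ := Nat.exists_eq_add_of_le (show R ≤ n by omega)
      rw [show R + d + 1 - R = d + 1 by omega, show R + d + 1 - (R + 1) = d by omega,
        show R + d + 1 + (R + 1) = (R + d + 1 + R) + 1 by omega, hps d]
      simp only [alpha0]
      rw [choose_two_succ (R + 1), qPoch_succ q b (R + d + 1 + R), qPoch_succ q b R, hps R]
      have := hp d; have := hp R; have := hbn (R + d + 1 + R); have := hqN R; have := hqN d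
      have := fac_ne hq hb (R + d + 1 + R); have := hbn R
      field_simp
      ring
  have := key (n + 1) le_rfl
  simp only [Nat.sub_self, pow_zero, sub_self, mul_zero, zero_div] at this
  simp only [Nat.add_eq_zero_iff, one_ne_zero, and_false, if_false]
  exact ((mul_eq_zero.1 this).resolve_left (hqN n)).symm

lemma qBinom_div {q : ℂ} (hq : ‖q‖ < 1) {n k : ℕ} (h : k ≤ n) :
    qBinom q n k / qPoch q q n = 1 / (qPoch q q k * qPoch q q (n - k)) := by
  have := qPoch_ne hq hq n
  have := qPoch_ne hq hq k
  have := qPoch_ne hq hq (n - k)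
  rw [qBinom, if_pos h]
  field_simp

lemma bailey_step' {q b : ℂ} (hq : ‖q‖ < 1) (hb : ‖b‖ < 1) {α A : ℕ → ℂ}
    (h : IsB q b α (fun n => A n / qPoch q q n)) :
    IsB q b (fun r => b ^ r * q ^ (2 * r.choose 2) * α r)
      (fun n => (∑ k ∈ Finset.range (n + 1),
        b ^ k * q ^ (2 * k.choose 2) * qBinom q n k * A k) / qPoch q q n) := by
  have h1 := bailey_step hq hb h
  convert h1 using 2 with n
  rw [Finset.sum_div]
  apply Finset.sum_congr rfl
  intro k hk
  have hk' : k ≤ n := by simpa [Nat.lt_succ_iff] using hk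
  have := qBinom_div hq hk'
  calc _ = b ^ k * q ^ (2 * k.choose 2) * (qBinom q n k / qPoch q q n) * A k := by ring
    _ = _ := by rw [this]; ring

noncomputable def Aseq (q z : ℂ) : ℕ → ℕ → ℂ
  | 0 => fun n => if n = 0 then 1 else 0
  | j + 1 => fun n => ∑ k ∈ Finset.range (n + 1),
        z ^ k * q ^ (2 * k.choose 2) * qBinom q n k * Aseq q z j k

lemma qBinom_zero_right {q : ℂ} (hq : ‖q‖ < 1) (n : ℕ) : qBinom q n 0 = 1 := by
  have := qPoch_ne hq hq n
  simp [qBinom, qPoch_zero, this]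

lemma Aseq_one {q z : ℂ} (hq : ‖q‖ < 1) (n : ℕ) : Aseq q z 1 n = 1 := by
  simp only [Aseq]
  rw [Finset.sum_eq_single 0]
  · simp [qBinom_zero_right hq]
  · intro k _ hk; simp [hk]
  · simp

lemma Aseq_isB {q z : ℂ} (hq : ‖q‖ < 1) (hz : ‖z‖ < 1) (j : ℕ) :
    IsB q z (fun r => (z ^ r * q ^ (2 * r.choose 2)) ^ j * alpha0 q z r)
      (fun n => Aseq q z j n / qPoch q q n) := by
  induction j with
  | zero =>
    have := unit_pair hq hz
    convert this using 2 with n n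
    · simp
    · rcases n with _ | n <;> simp [Aseq, qPoch_zero]
  | succ j ih =>
    have := bailey_step' hq hz ih
    have e : (fun r => (z ^ r * q ^ (2 * r.choose 2)) ^ (j + 1) * alpha0 q z r) =
        fun r => z ^ r * q ^ (2 * r.choose 2) *
          ((z ^ r * q ^ (2 * r.choose 2)) ^ j * alpha0 q z r) := by
      funext r; ring
    rw [e]
    exact this

/-- Change of parameter `b → b q` by shifting `n`. -/
lemma bailey_shift {q b : ℂ} (hq : ‖q‖ < 1) (hb : ‖b‖ < 1) {α β U V : ℕ → ℂ} (h : IsB q b α β)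
    (hV : V 0 = 0) (hUV : ∀ n r, r ≤ n + 1 → (1 - q ^ (n + 1)) * α r
      = U r * (1 - q ^ (n + 1 - r)) + V r * (1 - b * q ^ (n + r))) :
    IsB q (b * q) (fun r => (U r + V (r + 1)) / (1 - b))
      (fun n => (1 - q ^ (n + 1)) * β (n + 1)) := by
  intro n
  have hp := fun n => qPoch_ne hq hq n
  have hbn := qPoch_ne hq hb
  have hqN : ∀ n : ℕ, 1 - q ^ (n + 1) ≠ 0 := fun n => by
    have := fac_ne hq hq n
    rwa [← pow_succ'] at this
  have hps : ∀ n, qPoch q q (n + 1) = qPoch q q n * (1 - q ^ (n + 1)) := fun n => by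
    rw [qPoch_succ, ← pow_succ']
  have hb1 := one_sub_ne hb
  have hbq : ‖b * q‖ < 1 := by simpa using norm_mul_pow_lt hq hb 1
  have hbqn := qPoch_ne hq hbq
  simp only
  rw [h (n + 1), Finset.mul_sum]
  have e0 : ∀ r ∈ Finset.range (n + 1 + 1),
      (1 - q ^ (n + 1)) * (α r / (qPoch q q (n + 1 - r) * qPoch q b (n + 1 + r)))
      = U r * (1 - q ^ (n + 1 - r)) / (qPoch q q (n + 1 - r) * qPoch q b (n + 1 + r))
       + V r * (1 - b * q ^ (n + r)) / (qPoch q q (n + 1 - r) * qPoch q b (n + 1 + r)) := by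
    intro r hr
    rw [← mul_div_assoc, hUV n r (by simpa [Nat.lt_succ_iff] using hr), add_div]
  rw [Finset.sum_congr rfl e0, Finset.sum_add_distrib, Finset.sum_range_succ,
    Finset.sum_range_succ' _ (n + 1)]
  simp only [hV, Nat.sub_self, pow_zero, sub_self, mul_zero, zero_mul, zero_div, add_zero]
  rw [← Finset.sum_add_distrib]
  apply Finset.sum_congr rfl
  intro r hr
  have hr' : r ≤ n := by simpa [Nat.lt_succ_iff] using hr
  obtain ⟨d, rfl⟩ := Nat.exists_eq_add_of_le hr'
  rw [show r + d + 1 - r = d + 1 by omega, show r + d + 1 - (r + 1) = d by omega,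
    show r + d - r = d by omega, show r + d + 1 + r = (r + d + r) + 1 by omega,
    show r + d + 1 + (r + 1) = (r + d + r) + 1 + 1 by omega, hps d,
    qPoch_succ q b (r + d + r + 1), show r + d + (r + 1) = r + d + r + 1 by omega,
    qPoch_succ_left]
  have := hp d; have := hqN d; have := hbqn (r + d + r)
  have := fac_ne hq hb (r + d + r + 1)
  have e1 : U r * (1 - q ^ (d + 1)) / (qPoch q q d * (1 - q ^ (d + 1)) *
      ((1 - b) * qPoch q (b * q) (r + d + r)))
      = U r / (qPoch q q d * ((1 - b) * qPoch q (b * q) (r + d + r))) := by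
    have := hqN d
    field_simp
  have e2 : V (r + 1) * (1 - b * q ^ (r + d + r + 1)) / (qPoch q q d *
      ((1 - b) * qPoch q (b * q) (r + d + r) * (1 - b * q ^ (r + d + r + 1))))
      = V (r + 1) / (qPoch q q d * ((1 - b) * qPoch q (b * q) (r + d + r))) := by
    rw [← mul_assoc, mul_div_mul_right _ _ this]
  rw [e1, e2]
  field_simp

noncomputable def Eseq (q b : ℂ) (M r : ℕ) : ℂ :=
  (b ^ r * q ^ (2 * r.choose 2)) ^ M * ((-1) ^ r * q ^ (r.choose 2))

noncomputable def Vseq (q b : ℂ) (M : ℕ) : ℕ → ℂ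
  | 0 => 0
  | r + 1 => Eseq q b M (r + 1) * qPoch q b r / qPoch q q r

lemma Aseq_shift {q z : ℂ} (hq : ‖q‖ < 1) (hz : ‖z‖ < 1) (M : ℕ) :
    IsB q (z * q) (fun r => (Eseq q z M r * q ^ r + Eseq q z M (r + 1)) * qPoch q z r /
        qPoch q q r / (1 - z))
      (fun n => Aseq q z M (n + 1) / qPoch q q n) := by
  have hp := fun n => qPoch_ne hq hq n
  have hqN : ∀ n : ℕ, 1 - q ^ (n + 1) ≠ 0 := fun n => by
    have := fac_ne hq hq n
    rwa [← pow_succ'] at this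
  have hps : ∀ n, qPoch q q (n + 1) = qPoch q q n * (1 - q ^ (n + 1)) := fun n => by
    rw [qPoch_succ, ← pow_succ']
  have := bailey_shift hq hz (Aseq_isB hq hz M)
    (U := fun r => Eseq q z M r * q ^ r * qPoch q z r / qPoch q q r) (V := Vseq q z M) rfl ?_
  · convert this using 2 with r r
    · simp only [Vseq]; ring
    · rw [hps]
      have := hp r; have := hqN r
      field_simp
  · intro n r hr
    rcases r with _ | r
    · simp [Vseq, Eseq, alpha0, qPoch_zero]
    · obtain ⟨d, rfl⟩ := Nat.exists_eq_add_of_le (show r ≤ n by omega)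
      simp only [Vseq, Eseq, alpha0]
      rw [show r + d + 1 - (r + 1) = d by omega, hps, qPoch_succ q z]
      have := hp r; have := hqN r
      field_simp
      ring

lemma hasSum_of {ι : Type*} {f g : ι → ℂ} {a b : ℂ} (h : HasSum f a) (hf : ∀ i, g i = f i)
    (hab : b = a) : HasSum g b := by
  obtain rfl : g = f := funext hf
  rw [hab]; exact h

lemma tele {g : ℕ → ℂ} (hg : Summable g) : HasSum (fun s => g s - g (s + 1)) (g 0) := by
  have h1 := hg.hasSum
  have h2 := (hasSum_nat_add_iff' 1).2 h1
  have := h1.sub h2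
  simpa using this

noncomputable def tt (q x : ℂ) (r s : ℕ) : ℂ :=
  qPoch q x (r + s) * qPoch q q (r + s) * x ^ (r + s) /
    (qPoch q q s * qPoch q (x ^ 2 * q) (2 * r + s))

lemma norm_sq_lt {x : ℂ} (hx : ‖x‖ < 1) : ‖x ^ 2‖ < 1 := by
  rw [norm_pow]; nlinarith [norm_nonneg x]

lemma tt_bound {q x : ℂ} (hq : ‖q‖ < 1) (hx : ‖x‖ < 1) :
    ∃ C : ℝ, 0 ≤ C ∧ ∀ r s, ‖tt q x r s‖ ≤ C * ‖x‖ ^ (r + s) := by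
  obtain ⟨C1, h1, h1a, h1b⟩ := qPoch_bound hq hx
  obtain ⟨C2, h2, h2a, h2b⟩ := qPoch_bound hq hq
  have hz : ‖x ^ 2 * q‖ < 1 := by simpa using norm_mul_pow_lt hq (norm_sq_lt hx) 1
  obtain ⟨C3, h3, h3a, h3b⟩ := qPoch_bound hq hz
  refine ⟨C1 * C2 * (C2 * C3), by positivity, ?_⟩
  intro r s
  have : tt q x r s = qPoch q x (r + s) * qPoch q q (r + s) *
     ((qPoch q q s)⁻¹ * (qPoch q (x ^ 2 * q) (2 * r + s))⁻¹) * x ^ (r + s) := by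
    rw [tt, div_eq_mul_inv, mul_inv]; ring
  rw [this, norm_mul, norm_mul, norm_mul, norm_mul, norm_pow]
  gcongr
  · exact h1a _
  · exact h2a _
  · exact h2b _
  · exact h3b _

lemma summable_of_geo {f : ℕ → ℂ} {x : ℂ} (hx : ‖x‖ < 1) {C : ℝ} (h : ∀ s, ‖f s‖ ≤ C * ‖x‖ ^ s) :
    Summable f :=
  Summable.of_norm_bounded ((summable_geometric_of_lt_one (norm_nonneg x) hx).mul_left C) h

lemma tt_summable {q x : ℂ} (hq : ‖q‖ < 1) (hx : ‖x‖ < 1) (r : ℕ) : Summable (tt q x r) := by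
  obtain ⟨C, hC, h⟩ := tt_bound hq hx
  apply summable_of_geo hx (C := C * ‖x‖ ^ r)
  intro s
  rw [mul_assoc, ← pow_add]
  exact h r s

lemma gauss {q x : ℂ} (hq : ‖q‖ < 1) (hx : ‖x‖ < 1) (r : ℕ) :
    HasSum (tt q x r) ((1 - x ^ 2) * x ^ r * qPoch q q r /
      ((1 - x * q ^ r) * qPoch q (x ^ 2) r)) := by
  have hp := fun n => qPoch_ne hq hq n
  have hz2 := norm_sq_lt hx
  have hz : ‖x ^ 2 * q‖ < 1 := by simpa using norm_mul_pow_lt hq hz2 1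
  have hzn := qPoch_ne hq hz
  have hqN : ∀ n : ℕ, 1 - q ^ (n + 1) ≠ 0 := fun n => by
    have := fac_ne hq hq n
    rwa [← pow_succ'] at this
  have hps : ∀ n, qPoch q q (n + 1) = qPoch q q n * (1 - q ^ (n + 1)) := fun n => by
    rw [qPoch_succ, ← pow_succ']
  have hnb : ∀ (y : ℂ), ‖y‖ < 1 → ∀ s : ℕ, ‖1 - y * q ^ s‖ ≤ 2 := by
    intro y hy s
    have := norm_mul_pow_lt hq hy s
    refine (norm_sub_le _ _).trans ?_
    rw [norm_one]; linarith
  induction r with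
  | zero =>
    have hx1 := one_sub_ne hx
    obtain ⟨C, hC, h⟩ := tt_bound hq hx
    have hg : Summable (fun s => tt q x 0 s * (1 - x ^ 2 * q ^ s)) := by
      apply summable_of_geo hx (C := C * 2)
      intro s
      rw [norm_mul]
      have := h 0 s
      rw [zero_add] at this
      calc _ ≤ C * ‖x‖ ^ s * 2 := by
            gcongr
            exact hnb _ hz2 s
        _ = _ := by ring
    have ht := (tele hg).mul_left (1 - x)⁻¹
    refine hasSum_of ht ?_ ?_
    · intro s
      simp only [tt, zero_add, mul_zero]
      rw [qPoch_succ q x, hps, qPoch_succ q (x ^ 2 * q)]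
      have := hp s; have := hzn s; have := hqN s; have := fac_ne hq hz s
      have h5 : 1 - x ^ 2 * q ^ (s + 1) ≠ 0 := fac_ne hq hz2 (s + 1)
      have h6 : 1 - x ^ 2 * q * q ^ s = 1 - x ^ 2 * q ^ (s + 1) := by ring
      rw [h6]
      field_simp
      ring
    · simp [tt, qPoch_zero]
      field_simp
  | succ r ih =>
    obtain ⟨C, hC, h⟩ := tt_bound hq hx
    set G : ℕ → ℂ := fun s => tt q x r s * (1 - q ^ s) with hG
    have hgs : Summable G := by
      apply summable_of_geo hx (C := C * ‖x‖ ^ r * 2)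
      intro s
      simp only [hG]
      rw [norm_mul]
      have h1 : ‖1 - q ^ s‖ ≤ 2 := by
        refine (norm_sub_le _ _).trans ?_
        rw [norm_one, norm_pow]
        have := pow_le_one₀ (n := s) (norm_nonneg q) hq.le
        linarith
      calc _ ≤ C * ‖x‖ ^ (r + s) * 2 := by
            gcongr
            exact h r s
        _ = _ := by rw [pow_add]; ring
    have ht := tele hgs
    have hG0 : G 0 = 0 := by simp [hG]
    rw [hG0] at ht
    -- the shifted series
    set L : ℕ → ℂ := fun s => tt q x r s * (1 - q ^ s) / (1 - x ^ 2 * q ^ (2 * r + s + 1)) with hL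
    have hL0 : L 0 = 0 := by simp [hL]
    have hLs : ∀ s, L (s + 1) = tt q x (r + 1) s := by
      intro s
      simp only [hL, tt]
      rw [show r + 1 + s = r + (s + 1) by omega,
        show 2 * (r + 1) + s = (2 * r + (s + 1)) + 1 by omega, qPoch_succ q (x ^ 2 * q), hps s]
      have h5 : 1 - x ^ 2 * q ^ (2 * r + (s + 1) + 1) ≠ 0 := fac_ne hq hz2 _
      have h6 : 1 - x ^ 2 * q * q ^ (2 * r + (s + 1)) = 1 - x ^ 2 * q ^ (2 * r + (s + 1) + 1) := by
        ring
      rw [h6]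
      have := hp s; have := hqN s; have := hzn (2 * r + (s + 1))
      field_simp
    have hD : 1 - x ^ 2 * q ^ (2 * r + 1) ≠ 0 := fac_ne hq hz2 _
    have key : ∀ s, (1 - x ^ 2 * q ^ r) * (1 - x * q ^ (r + 1)) * L s
        = x * (1 - q ^ (r + 1)) * (1 - x * q ^ r) * tt q x r s
          + (1 - x ^ 2 * q ^ (2 * r + 1)) * (G s - G (s + 1)) := by
      intro s
      simp only [hL, hG, tt]
      rw [← add_assoc, ← add_assoc, qPoch_succ q x, hps (r + s), hps s, qPoch_succ q (x ^ 2 * q)]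
      have h5 : 1 - x ^ 2 * q ^ (2 * r + s + 1) ≠ 0 := fac_ne hq hz2 _
      have h6 : 1 - x ^ 2 * q * q ^ (2 * r + s) = 1 - x ^ 2 * q ^ (2 * r + s + 1) := by
        ring
      rw [h6]
      have := hp s; have := hqN s; have := hzn (2 * r + s)
      field_simp
      ring
    have hs1 := (ih.mul_left (x * (1 - q ^ (r + 1)) * (1 - x * q ^ r))).add
      (ht.mul_left (1 - x ^ 2 * q ^ (2 * r + 1)))
    rw [mul_zero, add_zero] at hs1
    simp only [← key] at hs1
    have n1 := fac_ne hq hz2 r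
    have n2 := fac_ne hq hx (r + 1)
    have n3 := fac_ne hq hx r
    have n4 := qPoch_ne hq hz2 r
    have hs2 := hs1.mul_left ((1 - x ^ 2 * q ^ r) * (1 - x * q ^ (r + 1)))⁻¹
    have hs3 : HasSum L ((1 - x ^ 2) * x ^ (r + 1) * qPoch q q (r + 1) /
      ((1 - x * q ^ (r + 1)) * qPoch q (x ^ 2) (r + 1))) := by
      refine hasSum_of hs2 ?_ ?_
      · intro s
        rw [inv_mul_cancel_left₀ (mul_ne_zero n1 n2)]
      · rw [hps, qPoch_succ]
        field_simp
        ring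
    have hs4 := (hasSum_nat_add_iff' 1).2 hs3
    simpa [hL0, hLs] using hs4

noncomputable def Pseq (c : ℕ → ℕ → ℕ → ℂ) : ℕ → ℕ → ℂ
  | 0 => fun _ => 1
  | j + 1 => fun n => ∑' k, c j n k * Pseq c j k

noncomputable def chainTerm (c : ℕ → ℕ → ℕ → ℂ) (m : ℕ) (k : Fin (m + 1) → ℕ) : ℂ :=
  ∏ i : Fin m, c i (k i.succ) (k i.castSucc)

lemma chainTerm_snoc (c : ℕ → ℕ → ℕ → ℂ) (m : ℕ) (k : Fin (m + 1) → ℕ) (n : ℕ) :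
    chainTerm c (m + 1) (Fin.snoc (α := fun _ => ℕ) k n)
      = c m n (k (Fin.last m)) * chainTerm c m k := by
  simp only [chainTerm, Fin.prod_univ_castSucc]
  rw [mul_comm]
  congr 1
  · simp only [Fin.succ_last, Fin.val_last]
    rw [Fin.snoc_last, Fin.snoc_castSucc]
  · apply Finset.prod_congr rfl
    intro i _
    rw [Fin.succ_castSucc, Fin.snoc_castSucc, Fin.snoc_castSucc]
    simp

lemma multi {c : ℕ → ℕ → ℕ → ℂ} {ρ : ℝ} (h0 : 0 ≤ ρ) (h1 : ρ < 1) {C : ℝ}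
    (hc : ∀ i n k, ‖c i n k‖ ≤ C * ρ ^ k) (m : ℕ) : ∀ (d : ℕ → ℂ) (D : ℝ),
    (∀ n, ‖d n‖ ≤ D * ρ ^ n) →
    Summable (fun k : Fin (m + 1) → ℕ => d (k (Fin.last m)) * chainTerm c m k) ∧
    ∑' k : Fin (m + 1) → ℕ, d (k (Fin.last m)) * chainTerm c m k = ∑' n, d n * Pseq c m n := by
  have hgeo := summable_geometric_of_lt_one h0 h1
  induction m with
  | zero =>
    intro d D hd
    have hs : Summable d := Summable.of_norm_bounded (hgeo.mul_left D) hd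
    have e := (Equiv.funUnique (Fin 1) ℕ)
    constructor
    · have := (Equiv.summable_iff (Equiv.funUnique (Fin 1) ℕ) (f := d)).2 hs
      refine this.congr ?_
      intro k
      simp [chainTerm, Equiv.funUnique]
    · rw [← Equiv.tsum_eq (Equiv.funUnique (Fin 1) ℕ)]
      apply tsum_congr
      intro k
      simp [chainTerm, Pseq, Equiv.funUnique]
  | succ m ih =>
    intro d D hd
    have hC : 0 ≤ C := by
      have := (norm_nonneg _).trans (hc 0 0 0)
      simpa using this
    have hD : 0 ≤ D := by
      have := (norm_nonneg _).trans (hd 0)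
      simpa using this
    let e : ℕ × (Fin (m + 1) → ℕ) ≃ (Fin (m + 2) → ℕ) := Fin.snocEquiv (fun _ => ℕ)
    have he : ∀ p : ℕ × (Fin (m + 1) → ℕ),
        d (e p (Fin.last (m + 1))) * chainTerm c (m + 1) (e p)
        = d p.1 * (c m p.1 (p.2 (Fin.last m)) * chainTerm c m p.2) := by
      intro p
      have : e p = Fin.snoc (α := fun _ => ℕ) p.2 p.1 := rfl
      rw [this, chainTerm_snoc, Fin.snoc_last]
    have hsum : Summable (fun p : ℕ × (Fin (m + 1) → ℕ) =>
        d p.1 * (c m p.1 (p.2 (Fin.last m)) * chainTerm c m p.2)) := by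
      have hg := (ih (fun k => ((C * ρ ^ k : ℝ) : ℂ)) C (by
        intro n
        rw [Complex.norm_real, Real.norm_of_nonneg (by positivity)])).1.norm
      have := (hgeo.mul_left D).mul_of_nonneg hg (fun n => by positivity) (fun k => norm_nonneg _)
      refine Summable.of_norm_bounded this ?_
      rintro ⟨n, k⟩
      simp only
      rw [norm_mul, norm_mul, norm_mul, Complex.norm_real, Real.norm_of_nonneg (by positivity)]
      gcongr
      · exact hd n
      · exact hc _ _ _
    constructor
    · rw [← Equiv.summable_iff e]
      exact hsum.congr (fun p => (he p).symm)
    · rw [← Equiv.tsum_eq e]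
      rw [tsum_congr he, hsum.tsum_prod]
      apply tsum_congr
      intro n
      simp only
      rw [tsum_mul_left, (ih (c m n) C (hc m n)).2]
      rfl

noncomputable def cfun (q x : ℂ) (a i n k : ℕ) : ℂ :=
  if i + 1 < a then q ^ (k ^ 2 - k) * x ^ (2 * k) * qBinom q n k
  else if i + 1 = a then q ^ (k ^ 2 - k) * x ^ (2 * k) * qBinom q (n + 1) k
  else q ^ (k ^ 2) * x ^ (2 * k) * qBinom q n k

lemma qBinom_bound {q : ℂ} (hq : ‖q‖ < 1) : ∃ C : ℝ, 0 ≤ C ∧ ∀ n k, ‖qBinom q n k‖ ≤ C := by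
  obtain ⟨C, h, ha, hb⟩ := qPoch_bound hq hq
  refine ⟨C * (C * C), by positivity, ?_⟩
  intro n k
  rw [qBinom]
  split_ifs
  · rw [div_eq_mul_inv, mul_inv, norm_mul, norm_mul]
    gcongr
    · exact ha _
    · exact hb _
    · exact hb _
  · rw [norm_zero]; positivity

lemma cfun_bound {q x : ℂ} (hq : ‖q‖ < 1) (hx : ‖x‖ < 1) (a : ℕ) :
    ∃ C : ℝ, ∀ i n k, ‖cfun q x a i n k‖ ≤ C * ‖x‖ ^ k := by
  obtain ⟨C, hC, h⟩ := qBinom_bound hq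
  refine ⟨C, ?_⟩
  have key : ∀ e k N, ‖q ^ e * x ^ (2 * k) * qBinom q N k‖ ≤ C * ‖x‖ ^ k := by
    intro e k N
    rw [norm_mul, norm_mul, norm_pow, norm_pow]
    have h1 : ‖q‖ ^ e ≤ 1 := pow_le_one₀ (norm_nonneg _) hq.le
    have h2 : ‖x‖ ^ (2 * k) ≤ ‖x‖ ^ k :=
      pow_le_pow_of_le_one (norm_nonneg _) hx.le (by omega)
    calc _ ≤ 1 * ‖x‖ ^ k * C := by
          gcongr
          exact h _ _
      _ = _ := by ring
  intro i n k
  rw [cfun]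
  split_ifs <;> exact key _ _ _

lemma Kfun_eq (m : ℕ) (k : Fin (m + 1) → ℕ) (i : ℕ) (hi : i < m + 1) :
    Kfun (m + 1) k (i + 1) = k ⟨i, hi⟩ := by
  rw [Kfun, dif_pos (by omega)]
  rfl

lemma Wterm_eq {q x : ℂ} (hq : ‖q‖ < 1) (m a : ℕ) (ha : a ≤ m) (k : Fin (m + 1) → ℕ) :
    Wterm q x (m + 1) a k = (qPoch q x (k (Fin.last m)) * x ^ (k (Fin.last m))) *
      chainTerm (cfun q x a) m k := by
  have hlast : Kfun (m + 1) k (m + 1) = k (Fin.last m) := Kfun_eq m k m (by omega)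
  have hch : chainTerm (cfun q x a) m k = ∏ i ∈ Finset.Ico 1 (m + 1),
      cfun q x a (i - 1) (Kfun (m + 1) k (i + 1)) (Kfun (m + 1) k i) := by
    rw [Finset.prod_Ico_eq_prod_range, Finset.prod_range]
    apply Finset.prod_congr rfl
    intro i _
    have hi := i.2
    have e1 : Kfun (m + 1) k (1 + (i : ℕ) + 1) = k i.succ := by
      rw [Kfun_eq m k (1 + i) (by omega)]
      congr 1
      ext; simp; omega
    have e2 : Kfun (m + 1) k (1 + (i : ℕ)) = k i.castSucc := by
      rw [add_comm 1 (i : ℕ), Kfun_eq m k i (by omega)]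
      rfl
    rw [e1, e2]
    simp
  have hthird : ∀ i ∈ Finset.Ico (a + 1) (m + 1),
      q ^ (Kfun (m + 1) k i ^ 2) * x ^ (2 * Kfun (m + 1) k i) *
      qBinom q (Kfun (m + 1) k (i + 1)) (Kfun (m + 1) k i)
      = cfun q x a (i - 1) (Kfun (m + 1) k (i + 1)) (Kfun (m + 1) k i) := by
    intro i hi
    rw [Finset.mem_Ico] at hi
    rw [cfun, if_neg (by omega), if_neg (by omega)]
  have hfirst : ∀ i ∈ Finset.Ico 1 a,
      q ^ (Kfun (m + 1) k i ^ 2 - Kfun (m + 1) k i) * x ^ (2 * Kfun (m + 1) k i) *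
      qBinom q (Kfun (m + 1) k (i + 1)) (Kfun (m + 1) k i)
      = cfun q x a (i - 1) (Kfun (m + 1) k (i + 1)) (Kfun (m + 1) k i) := by
    intro i hi
    rw [Finset.mem_Ico] at hi
    rw [cfun, if_pos (by omega)]
  rw [Wterm, hlast, hch, Finset.prod_congr rfl hthird, Finset.prod_congr rfl hfirst]
  rcases Nat.eq_zero_or_pos a with rfl | hpos
  · have : Kfun (m + 1) k 0 = 0 := by simp [Kfun]
    rw [this]
    simp [qBinom_zero_right hq]
  · have hmid : q ^ (Kfun (m + 1) k a ^ 2 - Kfun (m + 1) k a) * x ^ (2 * Kfun (m + 1) k a) *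
      qBinom q (Kfun (m + 1) k (a + 1) + 1) (Kfun (m + 1) k a)
      = cfun q x a (a - 1) (Kfun (m + 1) k (a + 1)) (Kfun (m + 1) k a) := by
      rw [cfun, if_neg (by omega), if_pos (by omega)]
    rw [hmid, mul_assoc, mul_assoc, ← Finset.prod_eq_prod_Ico_succ_bot (by omega)
      (fun i => cfun q x a (i - 1) (Kfun (m + 1) k (i + 1)) (Kfun (m + 1) k i)),
      Finset.prod_Ico_consecutive _ (by omega) (by omega)]

lemma tsum_fin {f : ℕ → ℂ} {n : ℕ} (h : ∀ k, n < k → f k = 0) :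
    ∑' k, f k = ∑ k ∈ Finset.range (n + 1), f k := by
  apply tsum_eq_sum
  intro k hk
  apply h
  simp at hk; omega

lemma qBinom_eq_zero {q : ℂ} {n k : ℕ} (h : n < k) : qBinom q n k = 0 := by
  rw [qBinom, if_neg (by omega)]

lemma Pseq_first {q x : ℂ} (hq : ‖q‖ < 1) (a j : ℕ) (hj : j < a) (n : ℕ) :
    Pseq (cfun q x a) j n = Aseq q (x ^ 2) (j + 1) n := by
  induction j generalizing n with
  | zero => rw [Aseq_one hq]; rfl
  | succ j ih =>
    rw [Pseq, Aseq]
    simp only [cfun, if_pos hj]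
    rw [tsum_fin (n := n)]
    · apply Finset.sum_congr rfl
      intro k _
      rw [ih (by omega), sq_sub_self]
      ring
    · intro k hk
      rw [qBinom_eq_zero hk]; ring

lemma Pseq_mid {q x : ℂ} (hq : ‖q‖ < 1) (a : ℕ) (n : ℕ) :
    Pseq (cfun q x a) a n = Aseq q (x ^ 2) (a + 1) (n + 1) := by
  rcases a with _ | a
  · rw [Aseq_one hq]; rfl
  · rw [Pseq, Aseq]
    simp only [cfun, if_neg (lt_irrefl _), if_true]
    rw [tsum_fin (n := n + 1)]
    · apply Finset.sum_congr rfl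
      intro k _
      rw [Pseq_first hq _ _ (by omega), sq_sub_self]
      ring
    · intro k hk
      rw [qBinom_eq_zero hk]; ring

noncomputable def alphaF (q z : ℂ) (M N r : ℕ) : ℂ :=
  ((z * q) ^ r * q ^ (2 * r.choose 2)) ^ N *
  ((Eseq q z M r * q ^ r + Eseq q z M (r + 1)) * qPoch q z r / qPoch q q r / (1 - z))

lemma Pseq_isB {q x : ℂ} (hq : ‖q‖ < 1) (hx : ‖x‖ < 1) (a N : ℕ) :
    IsB q (x ^ 2 * q) (alphaF q (x ^ 2) (a + 1) N)
      (fun n => Pseq (cfun q x a) (a + N) n / qPoch q q n) := by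
  have hz2 := norm_sq_lt hx
  have hz : ‖x ^ 2 * q‖ < 1 := by simpa using norm_mul_pow_lt hq hz2 1
  induction N with
  | zero =>
    have := Aseq_shift hq hz2 (a + 1)
    convert this using 2 with r n
    · simp [alphaF]
    · rw [add_zero, Pseq_mid hq]
  | succ N ih =>
    have := bailey_step' hq hz ih
    have e : alphaF q (x ^ 2) (a + 1) (N + 1) = fun r => (x ^ 2 * q) ^ r * q ^ (2 * r.choose 2) *
        alphaF q (x ^ 2) (a + 1) N r := by
      funext r
      simp only [alphaF]
      ring
    rw [e]
    convert this using 2 with n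
    congr 1
    rw [← add_assoc, Pseq]
    simp only
    rw [tsum_fin (n := n)]
    · apply Finset.sum_congr rfl
      intro k _
      rw [cfun, if_neg (by omega), if_neg (by omega), sq_eq_choose]
      ring
    · intro k hk
      rw [cfun, if_neg (by omega), if_neg (by omega), qBinom_eq_zero hk]; ring

noncomputable def sfin (q x : ℂ) (M N r : ℕ) : ℂ :=
  (-1) ^ r * q ^ (r.choose 2 + r) * ((x ^ 2) ^ r * q ^ (2 * r.choose 2)) ^ M *
    ((x ^ 2 * q) ^ r * q ^ (2 * r.choose 2)) ^ N * x ^ r *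
    ∑ i ∈ Finset.range (2 * M), (x * q ^ r) ^ i

lemma alphaF_gauss {q x : ℂ} (hq : ‖q‖ < 1) (hx : ‖x‖ < 1) (M N r : ℕ) :
    alphaF q (x ^ 2) M N r * ((1 - x ^ 2) * x ^ r * qPoch q q r /
      ((1 - x * q ^ r) * qPoch q (x ^ 2) r)) = sfin q x M N r := by
  have hz2 := norm_sq_lt hx
  have h1 := one_sub_ne hz2
  have h2 := fac_ne hq hx r
  have h3 := qPoch_ne hq hz2 r
  have h4 := qPoch_ne hq hq r
  have hg : (∑ i ∈ Finset.range (2 * M), (x * q ^ r) ^ i) = (1 - (x * q ^ r) ^ (2 * M)) /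
      (1 - x * q ^ r) := by
    rw [eq_div_iff h2]
    exact geom_sum_mul_neg _ _
  rw [sfin, hg]
  simp only [alphaF, Eseq]
  rw [choose_two_succ]
  field_simp
  ring

lemma alphaF_bound {q z : ℂ} (hq : ‖q‖ < 1) (hz : ‖z‖ < 1) (M N : ℕ) :
    ∃ C : ℝ, 0 ≤ C ∧ ∀ r, ‖alphaF q z M N r‖ ≤ C := by
  obtain ⟨C1, h1, h1a, h1b⟩ := qPoch_bound hq hz
  obtain ⟨C2, h2, h2a, h2b⟩ := qPoch_bound hq hq
  have hqe : ∀ e : ℕ, ‖q ^ e‖ ≤ 1 := fun e => by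
    rw [norm_pow]; exact pow_le_one₀ (norm_nonneg _) hq.le
  have hze : ∀ e : ℕ, ‖z ^ e‖ ≤ 1 := fun e => by
    rw [norm_pow]; exact pow_le_one₀ (norm_nonneg _) hz.le
  have hE : ∀ r, ‖Eseq q z M r‖ ≤ 1 := by
    intro r
    rw [Eseq, norm_mul, norm_pow, norm_mul, norm_mul]
    have : ‖(-1 : ℂ) ^ r‖ = 1 := by simp
    rw [this, one_mul]
    exact mul_le_one₀ (pow_le_one₀ (by positivity)
      (mul_le_one₀ (hze _) (norm_nonneg _) (hqe _))) (norm_nonneg _) (hqe _)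
  refine ⟨1 * ((1 * 1 + 1) * C1 * C2 * ‖(1 - z)⁻¹‖), by positivity, ?_⟩
  intro r
  have e : alphaF q z M N r = ((z * q) ^ r * q ^ (2 * r.choose 2)) ^ N *
    ((Eseq q z M r * q ^ r + Eseq q z M (r + 1)) * qPoch q z r * (qPoch q q r)⁻¹ * (1 - z)⁻¹) := by
    rw [alphaF]; ring
  rw [e, norm_mul, norm_mul, norm_mul, norm_mul]
  gcongr
  · rw [norm_pow]
    apply pow_le_one₀ (norm_nonneg _)
    rw [mul_pow, norm_mul, norm_mul]
    exact mul_le_one₀ (mul_le_one₀ (hze _) (norm_nonneg _) (hqe _)) (norm_nonneg _) (hqe _)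
  · refine (norm_add_le _ _).trans ?_
    rw [norm_mul]
    gcongr
    · exact hE _
    · exact hqe _
    · exact hE _
  · exact h1a _
  · exact h2b _

lemma S_hasSum {q x : ℂ} (hq : ‖q‖ < 1) (hx : ‖x‖ < 1) (a N : ℕ) :
    HasSum (sfin q x (a + 1) N) (∑' k : Fin (a + N + 1) → ℕ, Wterm q x (a + N + 1) a k) := by
  obtain ⟨C, hC⟩ := cfun_bound hq hx a
  obtain ⟨D, hD1, hD, _⟩ := qPoch_bound hq hx
  have hm := (multi (norm_nonneg x) hx hC (a + N) (fun n => qPoch q x n * x ^ n) D (by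
    intro n
    rw [norm_mul, norm_pow]
    gcongr
    exact hD n)).2
  rw [tsum_congr (Wterm_eq hq (a + N) a (by omega)), hm]
  have hz2 := norm_sq_lt hx
  have hP := Pseq_isB hq hx a N
  set α := alphaF q (x ^ 2) (a + 1) N with hα
  obtain ⟨C1, hC1, hb1⟩ := alphaF_bound hq hz2 (a + 1) N
  obtain ⟨C2, hC2, hb2⟩ := tt_bound hq hx
  have hgeo := summable_geometric_of_lt_one (norm_nonneg x) hx
  have hF : Summable (fun p : ℕ × ℕ => α p.1 * tt q x p.1 p.2) := by
    have := (hgeo.mul_left (C1 * C2)).mul_of_nonneg hgeo (fun n => by positivity)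
      (fun n => by positivity)
    refine Summable.of_norm_bounded this ?_
    rintro ⟨r, s⟩
    simp only
    rw [norm_mul]
    calc _ ≤ C1 * (C2 * ‖x‖ ^ (r + s)) := by
          gcongr
          · exact hb1 r
          · exact hb2 r s
      _ = _ := by rw [pow_add]; ring
  have h1 : HasSum (sfin q x (a + 1) N) (∑' p : ℕ × ℕ, α p.1 * tt q x p.1 p.2) := by
    have hr : ∀ r, HasSum (fun s => α r * tt q x r s) (sfin q x (a + 1) N r) := by
      intro r
      rw [← alphaF_gauss hq hx, hα]
      exact (gauss hq hx r).mul_left (alphaF q (x ^ 2) (a + 1) N r)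
    exact hF.hasSum.prod_fiberwise hr
  have h2 : ∑' p : ℕ × ℕ, α p.1 * tt q x p.1 p.2 = ∑' n, qPoch q x n * x ^ n *
      Pseq (cfun q x a) (a + N) n := by
    rw [← Equiv.tsum_eq Finset.HasAntidiagonal.sigmaAntidiagonalEquivProd]
    have hF' := (Equiv.summable_iff Finset.HasAntidiagonal.sigmaAntidiagonalEquivProd).2 hF
    refine (Summable.tsum_sigma hF').trans ?_
    apply tsum_congr
    intro n
    rw [tsum_fintype]
    simp only [Function.comp_apply, Finset.HasAntidiagonal.sigmaAntidiagonalEquivProd_apply]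
    rw [Finset.univ_eq_attach, Finset.sum_attach (Finset.HasAntidiagonal.antidiagonal n)
      (fun p : ℕ × ℕ => α p.1 * tt q x p.1 p.2),
      Finset.Nat.sum_antidiagonal_eq_sum_range_succ (fun r s => α r * tt q x r s)]
    have hp := qPoch_ne hq hq n
    have e : Pseq (cfun q x a) (a + N) n = qPoch q q n * (Pseq (cfun q x a) (a + N) n / qPoch q q n)
      := by field_simp
    have hPn := hP n
    simp only at hPn
    rw [e, hPn, Finset.mul_sum, Finset.mul_sum]
    apply Finset.sum_congr rfl
    intro r hr
    have hr' : r ≤ n := by simpa [Nat.lt_succ_iff] using hr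
    obtain ⟨d, rfl⟩ := Nat.exists_eq_add_of_le hr'
    rw [show r + d - r = d by omega, tt, show r + d + r = 2 * r + d by omega]
    ring
  rw [← h2]
  exact h1

lemma sfin_succ (q x : ℂ) (M N r : ℕ) :
    sfin q x M N (r + 1) = -(q ^ (N + 1) * x ^ (2 * (M + N) + 1)) * sfin q (q * x) M N r := by
  simp only [sfin]
  have : ∀ i, (x * q ^ (r + 1)) ^ i = (q * x * q ^ r) ^ i := by intro i; congr 1; ring
  simp only [this]
  rw [choose_two_succ]
  ring

theorem S_func {q x : ℂ} (hq : ‖q‖ < 1) (hx : ‖x‖ < 1) (a N : ℕ) :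
    ∑' k : Fin (a + N + 1) → ℕ, Wterm q x (a + N + 1) a k
      = (∑ i ∈ Finset.range (2 * (a + 1)), x ^ i) - q ^ (N + 1) * x ^ (2 * (a + N + 1) + 1) *
        ∑' k : Fin (a + N + 1) → ℕ, Wterm q (q * x) (a + N + 1) a k := by
  have hqx : ‖q * x‖ < 1 := by
    rw [mul_comm]; simpa using norm_mul_pow_lt hq hx 1
  have h1 := S_hasSum hq hx a N
  have h2 := (S_hasSum hq hqx a N).mul_left (-(q ^ (N + 1) * x ^ (2 * (a + 1 + N) + 1)))
  simp only [← sfin_succ] at h2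
  have h3 := (hasSum_nat_add_iff' 1).2 h1
  have h4 := h3.unique h2
  have h0 : sfin q x (a + 1) N 0 = ∑ i ∈ Finset.range (2 * (a + 1)), x ^ i := by
    simp [sfin]
  rw [Finset.sum_range_one, h0] at h4
  rw [show 2 * (a + N + 1) + 1 = 2 * (a + 1 + N) + 1 by ring]
  linear_combination h4

theorem stmt_10 (m a : ℕ) (hm : 1 ≤ m) (ha : a < m) (q x : ℂ)
    (hq : ‖q‖ < 1) (hx0 : 0 < ‖x‖) (hx : ‖x‖ < 1) :
    Wfun q m a x
      = (∑ i ∈ Finset.range (2 * a + 1), x ^ i)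
        - q ^ (m - a) * x ^ (2 * m)
        - q ^ (m - a + 1) * x ^ (2 * m + 1) * Wfun q m a (q * x) := by
  obtain ⟨N, rfl⟩ : ∃ N, m = a + N + 1 := ⟨m - a - 1, by omega⟩
  have hx' : x ≠ 0 := norm_pos_iff.1 hx0
  have h := S_func hq hx a N
  rw [show a + N + 1 - a = N + 1 by omega]
  simp only [Wfun]
  rw [h, show 2 * (a + 1) = 2 * a + 1 + 1 by ring, Finset.sum_range_succ']
  have e : ∑ k ∈ Finset.range (2 * a + 1), x ^ (k + 1)
      = x * ∑ k ∈ Finset.range (2 * a + 1), x ^ k := by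
    rw [Finset.mul_sum]
    exact Finset.sum_congr rfl (fun i _ => pow_succ' x i)
  rw [e]
  generalize (∑' k : Fin (a + N + 1) → ℕ, Wterm q (q * x) (a + N + 1) a k) = S
  generalize ∑ k ∈ Finset.range (2 * a + 1), x ^ k = T
  by_cases hq0 : q = 0
  · subst hq0
    simp
    field_simp
  · field_simp
    ring
end

section
/- Let m ≥ 2 and 0 ≤ a ≤ m−2 be integers and q, x complex numbers with |q| < 1 and |x| < 1, and define H_m^{(a)}(x) as in the paper. Then H_m^{(a)}(x) = (qx;q)_∞ · Σ_{k₁,…,k_{m−1} ≥ 0} (q^{k₁²+⋯+k_{m−1}² + k_{a+1}+⋯+k_{m−1}} / (qx;q)_{k_{m−1}}) · x^{2(k₁+⋯+k_{m−1}) + k_{m−1}} · (∏_{i=1, i≠a}^{m−2} [k_{i+1} choose k_i]_q) · [k_{a+1}+1 choose k_a]_q + (1 − x) · Σ_{k₁,…,k_m ≥ 0} ((qx;q)_{k_m} − (qx;q)_∞) · x^{k_m} · (∏_{i=1}^{a−1} q^{k_i²} x^{2k_i} [k_{i+1} choose k_i]_q) · q^{k_a²} x^{2k_a} [k_{a+1}+1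 choose k_a]_q · (∏_{i=a+1}^{m−1} q^{k_i²+k_i} x^{2k_i} [k_{i+1} choose k_i]_q), with the convention k₀ = 0 when a = 0; all series converge absolutely. -/
/-- The infinite q-Pochhammer symbol `(x;q)_∞ = ∏_{i=1}^∞ (1 - x q^{i-1})`. -/
noncomputable def qPochInf (q x : ℂ) : ℂ := ∏' i : ℕ, (1 - x * q ^ i)

/-- The summand of the multiple series `H_m^{(a)}(x)`, with the convention `k₀ = 0`. -/
noncomputable def Hterm (q x : ℂ) (m a : ℕ) (k : Fin m → ℕ) : ℂ :=
  qPoch q x (Kfun m k m + 1) * x ^ (Kfun m k m) *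
  (∏ i ∈ Finset.Ico 1 a,
    q ^ (Kfun m k i ^ 2) * x ^ (2 * Kfun m k i) * qBinom q (Kfun m k (i + 1)) (Kfun m k i)) *
  (q ^ (Kfun m k a ^ 2) * x ^ (2 * Kfun m k a) *
    qBinom q (Kfun m k (a + 1) + 1) (Kfun m k a)) *
  (∏ i ∈ Finset.Ico (a + 1) m,
    q ^ (Kfun m k i ^ 2 + Kfun m k i) * x ^ (2 * Kfun m k i) *
      qBinom q (Kfun m k (i + 1)) (Kfun m k i))

/-- The summand of the first series on the right-hand side:
`q^{k₁²+⋯+k_{m-1}²+k_{a+1}+⋯+k_{m-1}} / (qx;q)_{k_{m-1}} · x^{2(k₁+⋯+k_{m-1})+k_{m-1}}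
 · (∏_{i=1,i≠a}^{m-2} [k_{i+1},k_i]) · [k_{a+1}+1,k_a]`, with `k₀ = 0`. -/
noncomputable def AGterm (q x : ℂ) (m a : ℕ) (k : Fin (m - 1) → ℕ) : ℂ :=
  q ^ (∑ i ∈ Finset.Ico 1 m, (Kfun (m - 1) k i) ^ 2 + ∑ i ∈ Finset.Ico (a + 1) m, Kfun (m - 1) k i)
    / qPoch q (q * x) (Kfun (m - 1) k (m - 1)) *
  x ^ (2 * ∑ i ∈ Finset.Ico 1 m, Kfun (m - 1) k i + Kfun (m - 1) k (m - 1)) *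
  (∏ i ∈ (Finset.Ico 1 (m - 1)).erase a,
    qBinom q (Kfun (m - 1) k (i + 1)) (Kfun (m - 1) k i)) *
  qBinom q (Kfun (m - 1) k (a + 1) + 1) (Kfun (m - 1) k a)

/-- The summand of the second series on the right-hand side: like `Hterm` but with
`(qx;q)_{k_m} − (qx;q)_∞` in place of `(x;q)_{k_m+1}`. -/
noncomputable def Hterm2 (q x : ℂ) (m a : ℕ) (k : Fin m → ℕ) : ℂ :=
  (qPoch q (q * x) (Kfun m k m) - qPochInf q (q * x)) * x ^ (Kfun m k m) *
  (∏ i ∈ Finset.Ico 1 a,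
    q ^ (Kfun m k i ^ 2) * x ^ (2 * Kfun m k i) * qBinom q (Kfun m k (i + 1)) (Kfun m k i)) *
  (q ^ (Kfun m k a ^ 2) * x ^ (2 * Kfun m k a) *
    qBinom q (Kfun m k (a + 1) + 1) (Kfun m k a)) *
  (∏ i ∈ Finset.Ico (a + 1) m,
    q ^ (Kfun m k i ^ 2 + Kfun m k i) * x ^ (2 * Kfun m k i) *
      qBinom q (Kfun m k (i + 1)) (Kfun m k i))


lemma aux_qPoch_succ (q x : ℂ) (n : ℕ) : qPoch q x (n + 1) = qPoch q x n * (1 - x * q ^ n) := by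
  simp [qPoch, Finset.prod_range_succ]

lemma aux_qPoch_succ' (q x : ℂ) (n : ℕ) :
    qPoch q x (n + 1) = (1 - x) * qPoch q (q * x) n := by
  unfold qPoch
  rw [Finset.prod_range_succ', mul_comm]
  congr 1
  · simp
  · apply Finset.prod_congr rfl
    intro i _
    ring

lemma aux_factor_ne (q x : ℂ) (hq : ‖q‖ < 1) (hx : ‖x‖ < 1) (n : ℕ) : 1 - x * q ^ n ≠ 0 := by
  intro h
  have h1 : x * q ^ n = 1 := (sub_eq_zero.mp h).symm
  have h2 : ‖x * q ^ n‖ < 1 := by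
    rw [norm_mul, norm_pow]
    calc ‖x‖ * ‖q‖ ^ n ≤ ‖x‖ * 1 := by
          gcongr
          exact pow_le_one₀ (norm_nonneg _) hq.le
      _ < 1 := by simpa using hx
  rw [h1] at h2
  simp at h2

lemma aux_qPoch_ne (q x : ℂ) (hq : ‖q‖ < 1) (hx : ‖x‖ < 1) (n : ℕ) : qPoch q x n ≠ 0 :=
  Finset.prod_ne_zero_iff.mpr fun i _ => aux_factor_ne q x hq hx i

lemma aux_geom_le (r : ℝ) (h0 : 0 ≤ r) (h1 : r < 1) (n : ℕ) :
    ∑ i ∈ Finset.range n, r ^ i ≤ (1 - r)⁻¹ := by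
  rw [← tsum_geometric_of_lt_one h0 h1]
  exact (summable_geometric_of_lt_one h0 h1).sum_le_tsum _ (fun i _ => pow_nonneg h0 i)

lemma aux_qPoch_bdd (q x : ℂ) (hq : ‖q‖ < 1) (hx : ‖x‖ < 1) :
    ∃ C : ℝ, ∀ n, ‖qPoch q x n‖ ≤ C := by
  refine ⟨Real.exp (1 - ‖q‖)⁻¹, fun n => ?_⟩
  unfold qPoch
  rw [norm_prod]
  calc ∏ i ∈ Finset.range n, ‖1 - x * q ^ i‖
      ≤ ∏ i ∈ Finset.range n, Real.exp (‖q‖ ^ i) := by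
        apply Finset.prod_le_prod (fun _ _ => norm_nonneg _)
        intro i _
        calc ‖1 - x * q ^ i‖ ≤ ‖(1 : ℂ)‖ + ‖x * q ^ i‖ := norm_sub_le _ _
          _ = 1 + ‖x‖ * ‖q‖ ^ i := by simp
          _ ≤ 1 + 1 * ‖q‖ ^ i := by gcongr
          _ ≤ _ := by linarith [Real.add_one_le_exp (‖q‖ ^ i)]
    _ = Real.exp (∑ i ∈ Finset.range n, ‖q‖ ^ i) := (Real.exp_sum _ _).symm
    _ ≤ _ := Real.exp_le_exp.mpr (aux_geom_le _ (norm_nonneg _) hq n)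

lemma aux_qPoch_inv_bdd (q x : ℂ) (hq : ‖q‖ < 1) (hx : ‖x‖ < 1) :
    ∃ C : ℝ, ∀ n, ‖(qPoch q x n)⁻¹‖ ≤ C := by
  refine ⟨Real.exp ((1 - ‖x‖)⁻¹ * (1 - ‖q‖)⁻¹), fun n => ?_⟩
  have hx' : 0 < 1 - ‖x‖ := by linarith
  unfold qPoch
  rw [norm_inv, norm_prod, ← Finset.prod_inv_distrib]
  calc ∏ i ∈ Finset.range n, ‖1 - x * q ^ i‖⁻¹
      ≤ ∏ i ∈ Finset.range n, Real.exp ((1 - ‖x‖)⁻¹ * ‖q‖ ^ i) := by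
        apply Finset.prod_le_prod (fun _ _ => by positivity)
        intro i _
        have hqi : ‖q‖ ^ i ≤ 1 := pow_le_one₀ (norm_nonneg _) hq.le
        have hqi0 : 0 ≤ ‖q‖ ^ i := by positivity
        have h1 : 1 - ‖x‖ * ‖q‖ ^ i ≤ ‖1 - x * q ^ i‖ := by
          have := norm_sub_norm_le (1 : ℂ) (x * q ^ i)
          simpa using this
        have hle : ‖x‖ * ‖q‖ ^ i ≤ ‖x‖ := mul_le_of_le_one_right (norm_nonneg _) hqi
        have h2 : 0 < 1 - ‖x‖ * ‖q‖ ^ i := by linarith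
        have h3 : (1 - ‖x‖ * ‖q‖ ^ i)⁻¹ ≤ 1 + (1 - ‖x‖)⁻¹ * ‖q‖ ^ i := by
          have e : (1 - ‖x‖ * ‖q‖ ^ i)⁻¹
              = 1 + (1 - ‖x‖ * ‖q‖ ^ i)⁻¹ * (‖x‖ * ‖q‖ ^ i) := by
            field_simp
            ring
          rw [e]
          have : (1 - ‖x‖ * ‖q‖ ^ i)⁻¹ ≤ (1 - ‖x‖)⁻¹ := by
            apply inv_anti₀ hx'
            linarith
          have h5 : ‖x‖ * ‖q‖ ^ i ≤ ‖q‖ ^ i := mul_le_of_le_one_left hqi0 hx.le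
          gcongr
        calc ‖1 - x * q ^ i‖⁻¹ ≤ (1 - ‖x‖ * ‖q‖ ^ i)⁻¹ := inv_anti₀ h2 h1
          _ ≤ _ := h3
          _ ≤ _ := by linarith [Real.add_one_le_exp ((1 - ‖x‖)⁻¹ * ‖q‖ ^ i)]
    _ = Real.exp (∑ i ∈ Finset.range n, (1 - ‖x‖)⁻¹ * ‖q‖ ^ i) := (Real.exp_sum _ _).symm
    _ ≤ _ := by
        rw [← Finset.mul_sum]
        apply Real.exp_le_exp.mpr
        exact mul_le_mul_of_nonneg_left (aux_geom_le _ (norm_nonneg _) hq n)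
          (inv_nonneg.mpr hx'.le)

lemma aux_qBinom_bdd (q : ℂ) (hq : ‖q‖ < 1) :
    ∃ B : ℝ, 0 ≤ B ∧ ∀ n c, ‖qBinom q n c‖ ≤ B := by
  obtain ⟨C, hC⟩ := aux_qPoch_bdd q q hq hq
  obtain ⟨D, hD⟩ := aux_qPoch_inv_bdd q q hq hq
  have hC0 : 0 ≤ C := (norm_nonneg _).trans (hC 0)
  have hD0 : 0 ≤ D := (norm_nonneg _).trans (hD 0)
  refine ⟨C * (D * D), by positivity, fun n c => ?_⟩
  unfold qBinom
  split_ifs with h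
  · rw [div_eq_mul_inv, mul_inv, norm_mul, norm_mul]
    gcongr
    · exact hC n
    · exact hD c
    · exact hD (n - c)
  · simp
    positivity

lemma aux_qBinom_zero_right (q : ℂ) (hq : ‖q‖ < 1) (n : ℕ) : qBinom q n 0 = 1 := by
  have := aux_qPoch_ne q q hq hq n
  have h0 : qPoch q q 0 = 1 := by simp [qPoch]
  simp [qBinom, h0, this]

lemma aux_pascal (q : ℂ) (hq : ‖q‖ < 1) (n c : ℕ) :
    qBinom q (n + 1) (c + 1) = qBinom q n c + q ^ (c + 1) * qBinom q n (c + 1) := by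
  have hne := aux_qPoch_ne q q hq hq
  have hf := aux_factor_ne q q hq hq
  have h0 : qPoch q q 0 = 1 := by simp [qPoch]
  rcases lt_trichotomy n c with h | h | h
  · simp [qBinom, show ¬ (c ≤ n) by omega, show ¬ (c + 1 ≤ n) by omega]
  · subst h
    simp [qBinom, h0, hne]
  · obtain ⟨d, rfl⟩ := Nat.exists_eq_add_of_lt h
    have e1 : c + d + 1 + 1 - (c + 1) = d + 1 := by omega
    have e2 : c + d + 1 - c = d + 1 := by omega
    have e3 : c + d + 1 - (c + 1) = d := by omega
    simp only [qBinom, e1, e2, e3, show c + 1 ≤ c + d + 1 + 1 by omega,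
      show c ≤ c + d + 1 by omega, show c + 1 ≤ c + d + 1 by omega, if_true]
    rw [aux_qPoch_succ q q (c + d + 1), aux_qPoch_succ q q c, aux_qPoch_succ q q d]
    have a1 := hne c
    have a2 := hne d
    have a3 := hf c
    have a4 := hf d
    field_simp
    ring

lemma aux_summable_binom (q x : ℂ) (hq : ‖q‖ < 1) (hx : ‖x‖ < 1) (c : ℕ) :
    Summable (fun n : ℕ => x ^ n * qBinom q n c) := by
  obtain ⟨B, hB0, hB⟩ := aux_qBinom_bdd q hq
  apply Summable.of_norm_bounded
    ((summable_geometric_of_lt_one (norm_nonneg x) hx).mul_right B)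
  intro n
  rw [norm_mul, norm_pow]
  gcongr
  exact hB n c

lemma aux_tsum_binom (q x : ℂ) (hq : ‖q‖ < 1) (hx : ‖x‖ < 1) (c : ℕ) :
    ∑' n : ℕ, x ^ n * qBinom q n c = x ^ c / qPoch q x (c + 1) := by
  induction c with
  | zero =>
    simp only [aux_qBinom_zero_right q hq, mul_one]
    rw [tsum_geometric_of_norm_lt_one hx]
    simp [qPoch]
  | succ c ih =>
    have hS := aux_summable_binom q x hq hx
    have key : ∑' n : ℕ, x ^ n * qBinom q n (c + 1)
        = x * (∑' n : ℕ, x ^ n * qBinom q n c)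
          + x * q ^ (c + 1) * ∑' n : ℕ, x ^ n * qBinom q n (c + 1) := by
      conv_lhs => rw [(hS (c + 1)).tsum_eq_zero_add]
      rw [← tsum_mul_left, ← tsum_mul_left, ← ((hS c).mul_left _).tsum_add ((hS (c + 1)).mul_left _)]
      have : qBinom q 0 (c + 1) = 0 := by simp [qBinom]
      rw [this, mul_zero, zero_add]
      apply tsum_congr
      intro n
      rw [aux_pascal q hq]
      ring
    rw [ih] at key
    have h1 := aux_factor_ne q x hq hx (c + 1)
    have h2 := aux_qPoch_ne q x hq hx (c + 1)
    rw [aux_qPoch_succ, eq_div_iff (mul_ne_zero h2 h1)]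
    have key2 : (∑' n : ℕ, x ^ n * qBinom q n (c + 1)) * (1 - x * q ^ (c + 1))
        = x * (x ^ c / qPoch q x (c + 1)) := by linear_combination key
    calc _ = ((∑' n : ℕ, x ^ n * qBinom q n (c + 1)) * (1 - x * q ^ (c + 1)))
              * qPoch q x (c + 1) := by ring
      _ = _ := by
        rw [key2]
        field_simp
        ring

lemma aux_summable_geom (r : ℝ) (h0 : 0 ≤ r) (h1 : r < 1) (m : ℕ) :
    Summable (fun k : Fin m → ℕ => ∏ i, r ^ k i) := by
  induction m with
  | zero => exact (hasSum_fintype _).summable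
  | succ m ih =>
    rw [← (Fin.snocEquiv (fun _ : Fin (m + 1) => ℕ)).summable_iff]
    have := (summable_geometric_of_lt_one h0 h1).mul_of_nonneg ih
      (fun n => pow_nonneg h0 n) (fun k => Finset.prod_nonneg fun i _ => pow_nonneg h0 _)
    refine this.congr ?_
    rintro ⟨n, k⟩
    simp [Fin.snocEquiv, Fin.prod_univ_castSucc, mul_comm]

/-- common factor -/
noncomputable def auxT (q x : ℂ) (m a : ℕ) (k : Fin m → ℕ) : ℂ :=
  x ^ (Kfun m k m) *
  (∏ i ∈ Finset.Ico 1 a,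
    q ^ (Kfun m k i ^ 2) * x ^ (2 * Kfun m k i) * qBinom q (Kfun m k (i + 1)) (Kfun m k i)) *
  (q ^ (Kfun m k a ^ 2) * x ^ (2 * Kfun m k a) *
    qBinom q (Kfun m k (a + 1) + 1) (Kfun m k a)) *
  (∏ i ∈ Finset.Ico (a + 1) m,
    q ^ (Kfun m k i ^ 2 + Kfun m k i) * x ^ (2 * Kfun m k i) *
      qBinom q (Kfun m k (i + 1)) (Kfun m k i))

lemma aux_prod_erase {R : Type*} [CommMonoid R] (f : ℕ → R) (a M : ℕ) (h : a < M) :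
    ∏ i ∈ (Finset.Ico 1 M).erase a, f i
      = (∏ i ∈ Finset.Ico 1 a, f i) * ∏ i ∈ Finset.Ico (a + 1) M, f i := by
  rw [← Finset.prod_union]
  · apply Finset.prod_congr _ (fun _ _ => rfl)
    ext i
    simp only [Finset.mem_erase, Finset.mem_Ico, Finset.mem_union]
    omega
  · rw [Finset.disjoint_left]
    intro i
    simp only [Finset.mem_Ico]
    omega

lemma aux_prod_split {R : Type*} [CommMonoid R] (f : ℕ → R) (a M : ℕ) (h : a < M)
    (hf : f 0 = 1) :
    ∏ i ∈ Finset.Ico 1 M, f i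
      = (∏ i ∈ Finset.Ico 1 a, f i) * f a * ∏ i ∈ Finset.Ico (a + 1) M, f i := by
  rcases Nat.eq_zero_or_pos a with rfl | ha
  · simp [hf]
  · rw [mul_right_comm, ← aux_prod_erase f a M h, Finset.prod_erase_mul]
    simp; omega

lemma aux_Kfun_zero (m : ℕ) (k : Fin m → ℕ) : Kfun m k 0 = 0 := by simp [Kfun]

lemma aux_prod_Kfun (r : ℝ) (m : ℕ) (k : Fin m → ℕ) :
    ∏ i, r ^ k i = ∏ i ∈ Finset.Ico 1 (m + 1), r ^ Kfun m k i := by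
  rw [Finset.prod_Ico_eq_prod_range, ← Fin.prod_univ_eq_prod_range (fun i => r ^ Kfun m k (1 + i))]
  apply Finset.prod_congr rfl
  rintro ⟨i, hi⟩ _
  simp [Kfun, show 1 + i ≤ m by omega]

lemma aux_term_le (q x : ℂ) (hq : ‖q‖ < 1) (hx : ‖x‖ < 1) (B : ℝ) (e c : ℕ) (b : ℂ)
    (hb : ‖b‖ ≤ B) : ‖q ^ e * x ^ (2 * c) * b‖ ≤ B * ‖x‖ ^ c := by
  rw [norm_mul, norm_mul, norm_pow, norm_pow]
  have h1 : ‖q‖ ^ e ≤ 1 := pow_le_one₀ (norm_nonneg _) hq.le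
  have h2 : ‖x‖ ^ (2 * c) ≤ ‖x‖ ^ c :=
    pow_le_pow_of_le_one (norm_nonneg _) hx.le (by omega)
  calc _ ≤ 1 * ‖x‖ ^ c * B := by gcongr
    _ = _ := by ring

lemma aux_T_summable (q x : ℂ) (hq : ‖q‖ < 1) (hx : ‖x‖ < 1) (m a : ℕ) (ha : a < m) :
    Summable (auxT q x m a) := by
  obtain ⟨B, hB0, hB⟩ := aux_qBinom_bdd q hq
  apply Summable.of_norm_bounded ((aux_summable_geom ‖x‖ (norm_nonneg x) hx m).mul_left
    (B ^ (a - 1) * B * B ^ (m - (a + 1))))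
  intro k
  rw [aux_prod_Kfun, Finset.prod_Ico_succ_top (by omega),
    aux_prod_split _ a m ha (by simp [aux_Kfun_zero])]
  unfold auxT
  rw [norm_mul, norm_mul, norm_mul, norm_pow, norm_prod, norm_prod]
  have b1 : ∏ i ∈ Finset.Ico 1 a, ‖q ^ (Kfun m k i ^ 2) * x ^ (2 * Kfun m k i)
      * qBinom q (Kfun m k (i + 1)) (Kfun m k i)‖
      ≤ B ^ (a - 1) * ∏ i ∈ Finset.Ico 1 a, ‖x‖ ^ Kfun m k i := by
    calc _ ≤ ∏ i ∈ Finset.Ico 1 a, (B * ‖x‖ ^ Kfun m k i) :=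
          Finset.prod_le_prod (fun _ _ => norm_nonneg _)
            (fun i _ => aux_term_le q x hq hx B _ _ _ (hB _ _))
      _ = _ := by rw [Finset.prod_mul_distrib]; simp
  have b2 : ∏ i ∈ Finset.Ico (a + 1) m, ‖q ^ (Kfun m k i ^ 2 + Kfun m k i) * x ^ (2 * Kfun m k i)
      * qBinom q (Kfun m k (i + 1)) (Kfun m k i)‖
      ≤ B ^ (m - (a + 1)) * ∏ i ∈ Finset.Ico (a + 1) m, ‖x‖ ^ Kfun m k i := by
    calc _ ≤ ∏ i ∈ Finset.Ico (a + 1) m, (B * ‖x‖ ^ Kfun m k i) :=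
          Finset.prod_le_prod (fun _ _ => norm_nonneg _)
            (fun i _ => aux_term_le q x hq hx B _ _ _ (hB _ _))
      _ = _ := by rw [Finset.prod_mul_distrib]; simp
  have b3 := aux_term_le q x hq hx B (Kfun m k a ^ 2) (Kfun m k a) _
    (hB (Kfun m k (a + 1) + 1) (Kfun m k a))
  have n1 : 0 ≤ ∏ i ∈ Finset.Ico 1 a, ‖x‖ ^ Kfun m k i := by positivity
  calc _ ≤ ‖x‖ ^ Kfun m k m * (B ^ (a - 1) * ∏ i ∈ Finset.Ico 1 a, ‖x‖ ^ Kfun m k i)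
        * (B * ‖x‖ ^ Kfun m k a)
        * (B ^ (m - (a + 1)) * ∏ i ∈ Finset.Ico (a + 1) m, ‖x‖ ^ Kfun m k i) := by
        gcongr
    _ = _ := by ring

lemma aux_Kfun_snoc (M : ℕ) (k : Fin M → ℕ) (n i : ℕ) (hi : i ≤ M) :
    Kfun (M + 1) (Fin.snoc (α := fun _ => ℕ) k n) i = Kfun M k i := by
  unfold Kfun
  by_cases h : 1 ≤ i
  · rw [dif_pos ⟨h, by omega⟩, dif_pos ⟨h, hi⟩]
    simp [Fin.snoc, show i - 1 < M by omega]
  · simp [h]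

lemma aux_Kfun_last (M : ℕ) (k : Fin M → ℕ) (n : ℕ) :
    Kfun (M + 1) (Fin.snoc (α := fun _ => ℕ) k n) (M + 1) = n := by
  simp [Kfun, Fin.snoc]

/-- factor without last variable -/
noncomputable def auxW (q x : ℂ) (M a : ℕ) (k : Fin M → ℕ) : ℂ :=
  (∏ i ∈ Finset.Ico 1 a,
    q ^ (Kfun M k i ^ 2) * x ^ (2 * Kfun M k i) * qBinom q (Kfun M k (i + 1)) (Kfun M k i)) *
  (q ^ (Kfun M k a ^ 2) * x ^ (2 * Kfun M k a) *
    qBinom q (Kfun M k (a + 1) + 1) (Kfun M k a)) *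
  (∏ i ∈ Finset.Ico (a + 1) M,
    q ^ (Kfun M k i ^ 2 + Kfun M k i) * x ^ (2 * Kfun M k i) *
      qBinom q (Kfun M k (i + 1)) (Kfun M k i)) *
  (q ^ (Kfun M k M ^ 2 + Kfun M k M) * x ^ (2 * Kfun M k M))

lemma aux_T_snoc (q x : ℂ) (M a : ℕ) (ha : a < M) (k : Fin M → ℕ) (n : ℕ) :
    auxT q x (M + 1) a (Fin.snoc (α := fun _ => ℕ) k n)
      = auxW q x M a k * (x ^ n * qBinom q n (Kfun M k M)) := by
  unfold auxT auxW
  rw [Finset.prod_Ico_succ_top (by omega), aux_Kfun_last, aux_Kfun_snoc _ _ _ M le_rfl,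
    aux_Kfun_snoc _ _ _ a (by omega), aux_Kfun_snoc _ _ _ (a + 1) (by omega)]
  have e1 : ∀ i ∈ Finset.Ico 1 a, q ^ (Kfun (M + 1) (Fin.snoc (α := fun _ => ℕ) k n) i ^ 2)
      * x ^ (2 * Kfun (M + 1) (Fin.snoc (α := fun _ => ℕ) k n) i)
      * qBinom q (Kfun (M + 1) (Fin.snoc (α := fun _ => ℕ) k n) (i + 1))
        (Kfun (M + 1) (Fin.snoc (α := fun _ => ℕ) k n) i)
      = q ^ (Kfun M k i ^ 2) * x ^ (2 * Kfun M k i)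
        * qBinom q (Kfun M k (i + 1)) (Kfun M k i) := by
    intro i hi
    rw [Finset.mem_Ico] at hi
    rw [aux_Kfun_snoc _ _ _ i (by omega), aux_Kfun_snoc _ _ _ (i + 1) (by omega)]
  have e2 : ∀ i ∈ Finset.Ico (a + 1) M,
      q ^ (Kfun (M + 1) (Fin.snoc (α := fun _ => ℕ) k n) i ^ 2
        + Kfun (M + 1) (Fin.snoc (α := fun _ => ℕ) k n) i)
      * x ^ (2 * Kfun (M + 1) (Fin.snoc (α := fun _ => ℕ) k n) i)
      * qBinom q (Kfun (M + 1) (Fin.snoc (α := fun _ => ℕ) k n) (i + 1))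
        (Kfun (M + 1) (Fin.snoc (α := fun _ => ℕ) k n) i)
      = q ^ (Kfun M k i ^ 2 + Kfun M k i) * x ^ (2 * Kfun M k i)
        * qBinom q (Kfun M k (i + 1)) (Kfun M k i) := by
    intro i hi
    rw [Finset.mem_Ico] at hi
    rw [aux_Kfun_snoc _ _ _ i (by omega), aux_Kfun_snoc _ _ _ (i + 1) (by omega)]
  rw [Finset.prod_congr rfl e1, Finset.prod_congr rfl e2]
  ring

/-- `AGterm` with shifted index -/
noncomputable def auxAG (q x : ℂ) (M a : ℕ) (k : Fin M → ℕ) : ℂ :=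
  q ^ (∑ i ∈ Finset.Ico 1 (M + 1), (Kfun M k i) ^ 2 + ∑ i ∈ Finset.Ico (a + 1) (M + 1), Kfun M k i)
    / qPoch q (q * x) (Kfun M k M) *
  x ^ (2 * ∑ i ∈ Finset.Ico 1 (M + 1), Kfun M k i + Kfun M k M) *
  (∏ i ∈ (Finset.Ico 1 M).erase a,
    qBinom q (Kfun M k (i + 1)) (Kfun M k i)) *
  qBinom q (Kfun M k (a + 1) + 1) (Kfun M k a)

lemma aux_AGterm_eq (q x : ℂ) (M a : ℕ) : AGterm q x (M + 1) a = auxAG q x M a := rfl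

lemma aux_AG (q x : ℂ) (M a : ℕ) (ha : a < M) (k : Fin M → ℕ) :
    auxAG q x M a k
      = auxW q x M a k * (x ^ Kfun M k M / qPoch q (q * x) (Kfun M k M)) := by
  unfold auxAG auxW
  rw [aux_prod_erase _ a M ha, pow_add q, pow_add x, pow_mul x 2,
    ← Finset.prod_pow_eq_pow_sum, ← Finset.prod_pow_eq_pow_sum, ← Finset.prod_pow_eq_pow_sum,
    aux_prod_split _ a (M + 1) (by omega) (by simp [aux_Kfun_zero]),
    aux_prod_split _ a (M + 1) (by omega) (by simp [aux_Kfun_zero]),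
    Finset.prod_Ico_succ_top (by omega), Finset.prod_Ico_succ_top (by omega),
    Finset.prod_Ico_succ_top (by omega)]
  simp only [Finset.prod_mul_distrib, pow_add, pow_mul x 2]
  ring

lemma aux_main (M a : ℕ) (haM : a < M) (q x : ℂ) (hq : ‖q‖ < 1) (hx : ‖x‖ < 1) :
    Summable (Hterm q x (M + 1) a) ∧ Summable (auxAG q x M a) ∧
    Summable (Hterm2 q x (M + 1) a) ∧ ∑' k : Fin (M + 1) → ℕ, Hterm q x (M + 1) a k
      = qPochInf q (q * x) * ∑' k : Fin M → ℕ, auxAG q x M a k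
        + (1 - x) * ∑' k : Fin (M + 1) → ℕ, Hterm2 q x (M + 1) a k := by
  have hT := aux_T_summable q x hq hx (M + 1) a (by omega)
  have hqx : ‖q * x‖ < 1 := by
    rw [norm_mul]
    exact mul_lt_one_of_nonneg_of_lt_one_left (norm_nonneg _) hq hx.le
  obtain ⟨C, hC⟩ := aux_qPoch_bdd q (q * x) hq hqx
  have eH2 : ∀ k, Hterm2 q x (M + 1) a k
      = (qPoch q (q * x) (Kfun (M + 1) k (M + 1)) - qPochInf q (q * x))
        * auxT q x (M + 1) a k := by
    intro k
    unfold Hterm2 auxT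
    ring
  have eH : ∀ k, Hterm q x (M + 1) a k
      = (1 - x) * qPochInf q (q * x) * auxT q x (M + 1) a k
        + (1 - x) * Hterm2 q x (M + 1) a k := by
    intro k
    rw [eH2]
    unfold Hterm auxT
    rw [aux_qPoch_succ']
    ring
  have sH2 : Summable (Hterm2 q x (M + 1) a) := by
    apply Summable.of_norm_bounded (hT.norm.mul_left (C + ‖qPochInf q (q * x)‖))
    intro k
    rw [eH2, norm_mul]
    gcongr
    exact (norm_sub_le _ _).trans (add_le_add_left (hC _) _)
  have sH : Summable (Hterm q x (M + 1) a) := by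
    rw [funext eH]
    exact (hT.mul_left _).add (sH2.mul_left _)
  -- pass to the product
  let e : (Fin M → ℕ) × ℕ ≃ (Fin (M + 1) → ℕ) :=
    (Equiv.prodComm _ _).trans (Fin.snocEquiv (fun _ : Fin (M + 1) => ℕ))
  have he : ∀ k n, auxT q x (M + 1) a (e (k, n))
      = auxW q x M a k * (x ^ n * qBinom q n (Kfun M k M)) :=
    by
    intro k n
    have h : e (k, n) = Fin.snoc (α := fun _ => ℕ) k n := rfl
    rw [h]
    exact aux_T_snoc q x M a haM k n
  have hTe : Summable (fun p => auxT q x (M + 1) a (e p)) := by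
    exact (Equiv.summable_iff (f := auxT q x (M + 1) a) e).mpr hT
  clear_value e
  have hx1 : 1 - x ≠ 0 := by simpa using aux_factor_ne q x hq hx 0
  have hfib : ∀ k, (1 - x) * ∑' n, auxT q x (M + 1) a (e (k, n)) = auxAG q x M a k := by
    intro k
    simp only [he]
    rw [tsum_mul_left, aux_tsum_binom q x hq hx, aux_AG q x M a haM, aux_qPoch_succ']
    have := aux_qPoch_ne q (q * x) hq hqx (Kfun M k M)
    field_simp
  have sAG : Summable (auxAG q x M a) :=
by
    have h := (hTe.prod.mul_left (1 - x))
    rw [funext hfib] at h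
    exact h
  refine And.intro sH (And.intro sAG (And.intro sH2 ?_))
  have hsum : (1 - x) * ∑' k, auxT q x (M + 1) a k
      = ∑' k : Fin M → ℕ, auxAG q x M a k := by
    rw [← e.tsum_eq, hTe.tsum_prod, ← tsum_mul_left]
    exact tsum_congr hfib
  rw [tsum_congr eH, (hT.mul_left _).tsum_add (sH2.mul_left _), tsum_mul_left, tsum_mul_left]
  congr 1
  rw [← hsum]
  ring

theorem stmt_11 (m a : ℕ) (hm : 2 ≤ m) (ha : a + 2 ≤ m) (q x : ℂ)
    (hq : ‖q‖ < 1) (hx : ‖x‖ < 1) :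
    Summable (Hterm q x m a) ∧
    Summable (AGterm q x m a) ∧
    Summable (Hterm2 q x m a) ∧
    ∑' k : Fin m → ℕ, Hterm q x m a k
      = qPochInf q (q * x) * ∑' k : Fin (m - 1) → ℕ, AGterm q x m a k
        + (1 - x) * ∑' k : Fin m → ℕ, Hterm2 q x m a k := by
  obtain ⟨M, rfl⟩ : ∃ M, m = M + 1 := ⟨m - 1, by omega⟩
  have haM : a < M := by omega
  exact aux_main M a haM q x hq hx
end

section
/- Let m ≥ 1 and 0 ≤ a ≤ m−1 be integers. Then for every real x > 0, sinh(2(a+1)x) / cosh((2m+1)x) = Σ_{n=1}^∞ χ_{8m+4}^{(a)}(n) · e^{−n x}, the series converging absolutely. -/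
/-- The (8m+4)-periodic function `χ_{8m+4}^{(a)}`. -/
def chiGen (m a n : ℕ) : ℤ :=
  if n % (8 * m + 4) = (2 * m - 2 * a - 1) % (8 * m + 4) then 1
  else if n % (8 * m + 4) = (6 * m + 2 * a + 5) % (8 * m + 4) then 1
  else if n % (8 * m + 4) = (2 * m + 2 * a + 3) % (8 * m + 4) then -1
  else if n % (8 * m + 4) = (6 * m - 2 * a + 1) % (8 * m + 4) then -1
  else 0

lemma hasSum_residue (N r : ℕ) (hr : r < N) (q : ℝ) (h0 : 0 ≤ q) (h1 : q < 1) :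
    HasSum (fun n : ℕ => if n % N = r then q ^ n else 0) (q ^ r * (1 - q ^ N)⁻¹) := by
  have hN : N ≠ 0 := by omega
  have hinj : Function.Injective (fun k : ℕ => r + N * k) := by
    intro b c h
    simpa [hN] using h
  rw [← hinj.hasSum_iff]
  · have h := (hasSum_geometric_of_lt_one (pow_nonneg h0 N) (pow_lt_one₀ h0 h1 hN)).mul_left (q ^ r)
    refine h.congr_fun ?_
    intro k
    simp [Nat.add_mul_mod_self_left, Nat.mod_eq_of_lt hr, pow_add, pow_mul]
  · intro n hn
    rw [if_neg]
    intro h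
    exact hn ⟨n / N, by simpa [h] using Nat.mod_add_div n N⟩

lemma chiGen_split (m a n : ℕ) (ha : a < m) (y : ℝ) :
    (chiGen m a n : ℝ) * y =
      (if n % (8 * m + 4) = 2 * m - 2 * a - 1 then y else 0)
      + (if n % (8 * m + 4) = 6 * m + 2 * a + 5 then y else 0)
      - (if n % (8 * m + 4) = 2 * m + 2 * a + 3 then y else 0)
      - (if n % (8 * m + 4) = 6 * m - 2 * a + 1 then y else 0) := by
  unfold chiGen
  rw [Nat.mod_eq_of_lt (a := 2 * m - 2 * a - 1) (by omega),
    Nat.mod_eq_of_lt (a := 6 * m + 2 * a + 5) (by omega),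
    Nat.mod_eq_of_lt (a := 2 * m + 2 * a + 3) (by omega),
    Nat.mod_eq_of_lt (a := 6 * m - 2 * a + 1) (by omega)]
  generalize n % (8 * m + 4) = t
  split_ifs <;> first | omega | simp

theorem stmt_16 (m a : ℕ) (hm : 1 ≤ m) (ha : a < m) (x : ℝ) (hx : 0 < x) :
    Summable (fun n : ℕ => (chiGen m a (n + 1) : ℝ) * Real.exp (-((n : ℝ) + 1) * x)) ∧
    Real.sinh (2 * ((a : ℝ) + 1) * x) / Real.cosh ((2 * (m : ℝ) + 1) * x)
      = ∑' n : ℕ, (chiGen m a (n + 1) : ℝ) * Real.exp (-((n : ℝ) + 1) * x) := by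
  obtain ⟨d, rfl⟩ : ∃ d, m = a + 1 + d := ⟨m - a - 1, by omega⟩
  set m := a + 1 + d with hmd
  set q := Real.exp (-x) with hq
  have h0 : 0 < q := Real.exp_pos _
  have h1 : q < 1 := by rw [hq, Real.exp_lt_one_iff]; linarith
  have hs : HasSum (fun n : ℕ => (chiGen m a n : ℝ) * q ^ n) _ :=
    ((((hasSum_residue (8 * m + 4) (2 * m - 2 * a - 1) (by omega) q h0.le h1).add
      (hasSum_residue (8 * m + 4) (6 * m + 2 * a + 5) (by omega) q h0.le h1)).sub
      (hasSum_residue (8 * m + 4) (2 * m + 2 * a + 3) (by omega) q h0.le h1)).sub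
      (hasSum_residue (8 * m + 4) (6 * m - 2 * a + 1) (by omega) q h0.le h1)).congr_fun
      (fun n => chiGen_split m a n ha _)
  have hz : chiGen m a 0 = 0 := by
    have := chiGen_split m a 0 ha 1
    rw [Nat.zero_mod, if_neg (by omega), if_neg (by omega), if_neg (by omega),
      if_neg (by omega)] at this
    exact_mod_cast (by simpa using this : (chiGen m a 0 : ℝ) = 0)
  rw [← hasSum_nat_add_iff' 1] at hs
  simp only [Finset.sum_range_one, hz, Int.cast_zero, zero_mul, sub_zero] at hs
  have he : (fun n : ℕ => (chiGen m a (n + 1) : ℝ) * Real.exp (-((n : ℝ) + 1) * x))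
      = fun n : ℕ => (chiGen m a (n + 1) : ℝ) * q ^ (n + 1) := by
    funext n
    rw [hq, ← Real.exp_nat_mul]
    congr 2
    push_cast
    ring
  rw [he]
  refine ⟨hs.summable, ?_⟩
  rw [hs.tsum_eq]
  have e1 : Real.exp (2 * ((a : ℝ) + 1) * x) = (q ^ (2 * (a + 1)))⁻¹ := by
    rw [hq, ← Real.exp_nat_mul, ← Real.exp_neg]
    congr 1
    push_cast
    ring
  have e2 : Real.exp ((2 * (m : ℝ) + 1) * x) = (q ^ (2 * m + 1))⁻¹ := by
    rw [hq, ← Real.exp_nat_mul, ← Real.exp_neg]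
    congr 1
    push_cast
    ring
  rw [Real.sinh_eq, Real.cosh_eq, Real.exp_neg, Real.exp_neg, e1, e2, inv_inv, inv_inv]
  have i1 : 2 * m - 2 * a - 1 = 2 * d + 1 := by omega
  have i2 : 6 * m - 2 * a + 1 = 2 * d + 1 + (4 * m + 2) := by omega
  have i3 : 6 * m + 2 * a + 5 = 2 * d + 1 + 4 * (a + 1) + 2 * (2 * m + 1) := by omega
  have i4 : 2 * m + 2 * a + 3 = 2 * d + 1 + 4 * (a + 1) := by omega
  have i5 : 2 * m + 1 = 2 * d + 1 + 2 * (a + 1) := by omega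
  have i6 : 8 * m + 4 = 4 * (2 * m + 1) := by ring
  have i7 : 4 * m + 2 = 2 * (2 * m + 1) := by ring
  have hlt : q ^ (8 * m + 4) < 1 := pow_lt_one₀ h0.le h1 (by omega)
  rw [i1, i2, i3, i4, i7]
  rw [i6] at hlt ⊢
  rw [i5] at hlt ⊢
  have hA : 0 < q ^ (a + 1) := by positivity
  have hB : 0 < q ^ (2 * d + 1) := by positivity
  simp only [pow_add q (2 * d + 1), pow_add q (2 * d + 1 + 4 * (a + 1)), pow_mul' q _ (2 * d + 1 + 2 * (a + 1)),
    pow_mul' q _ (a + 1)] at hlt ⊢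
  generalize q ^ (a + 1) = A at *
  generalize q ^ (2 * d + 1) = B at *
  have hne : 1 - (B * A ^ 2) ^ 4 ≠ 0 := by linarith
  have hne2 : 1 + (B * A ^ 2) ^ 2 ≠ 0 := by positivity
  rw [← sub_eq_zero]
  field_simp
  linear_combination (-(B * (1 - A ^ 4))) * mul_inv_cancel₀ hne
end
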